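/- Assuming the Riemann Hypothesis, for every complex number s with Re(s) > 1/2 such that s - 1 does not lie on the nonpositive real axis (i.e., s is not a real number in (1/2, 1]), one has 1/ζ(s) = lim_{x → ∞} exp(−E₁((s-1)·log x)) · ∏_{p ≤ x, p prime} (1 - p^{-s}), where the product runs over all primes p ≤ x. -/

import Mathlib

/-! Suppose `ζ` has no zero in the half-plane `Re s > θ`. Landau's argument, by Borel–Carathéodory,
bounds `ζ'/ζ` logarithmically there, so in the inversion formula for the Mellin transform of
`∫₁ˣ (ψ u - u) du`, which converges absolutely, the contour may be moved to `Re s = σ > θ`. Since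
`ψ` is monotone, integrals over intervals of length `1` then control `ψ x - x`, and
`∑_{p ≤ x} log p = x + O(x ^ β)` for every `β > θ`.

By partial summation `∑_{p ≤ x} p ^ (-s) - ∫₂ˣ u ^ (-s) / log u du` converges for `Re s > β` to a
holomorphic function of `s`. The integral is `E₁((s - 1) log 2) - E₁((s - 1) log x)`, and what the
logarithm of the Euler product has beyond `-∑ p ^ (-s)` converges absolutely for `Re s > 1/2`. So
the limit in the theorem exists and is holomorphic where `Re s > β` and `s - 1` is in the slit
plane. It equals `1/ζ(s)` for real `s > 1`, where `E₁((s - 1) log x) → 0`, hence everywhere in that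
connected region. -/

open Filter

/-- The exponential integral `E₁(z) = -γ - log z - ∑_{k=1}^∞ (-z)^k / (k·k!)`. -/
noncomputable def expIntegralE1 (z : ℂ) : ℂ :=
  -(Real.eulerMascheroniConstant : ℂ) - Complex.log z -
    ∑' k : ℕ, (-z) ^ (k + 1) / (((k + 1) * Nat.factorial (k + 1) : ℕ) : ℂ)

section Mellin

open Complex Set MeasureTheory Topology Asymptotics

variable {f : ℝ → ℂ} {a : ℝ} {s : ℂ}

lemma cpow_smul_indicator_Ioi (t : ℝ) :
    (t : ℂ) ^ (s - 1) • (Ioi a).indicator f t =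
      (Ioi a).indicator (fun t : ℝ => (t : ℂ) ^ (s - 1) * f t) t := by
  by_cases h : t ∈ Ioi a <;> simp [h]

lemma mellin_indicator_Ioi (ha : 0 ≤ a) :
    mellin ((Ioi a).indicator f) s = ∫ t in Ioi a, (t : ℂ) ^ (s - 1) * f t := by
  simp_rw [mellin, cpow_smul_indicator_Ioi]
  rw [setIntegral_indicator measurableSet_Ioi, inter_eq_right.mpr (Ioi_subset_Ioi ha)]

lemma mellinConvergent_indicator_Ioi (ha : 0 ≤ a) :
    MellinConvergent ((Ioi a).indicator f) s ↔
      IntegrableOn (fun t : ℝ => (t : ℂ) ^ (s - 1) * f t) (Ioi a) := by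
  simp_rw [MellinConvergent, cpow_smul_indicator_Ioi]
  rw [integrableOn_indicator_iff measurableSet_Ioi, inter_eq_left.mpr (Ioi_subset_Ioi ha)]

lemma isBigO_indicator_Ioi_atTop {β : ℝ} (hO : f =O[atTop] fun t => t ^ β) :
    (Ioi a).indicator f =O[atTop] fun t => t ^ (-(-β)) := by
  rw [neg_neg]
  exact hO.congr' ((eventually_gt_atTop a).mono fun t ht => (indicator_of_mem ht f).symm) .rfl

lemma isBigO_indicator_Ioi_nhdsWithin_zero (ha : 0 < a) (b : ℝ) :
    (Ioi a).indicator f =O[𝓝[>] 0] fun t => t ^ (-b) := by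
  refine (isBigO_zero _ _).congr' ?_ .rfl
  filter_upwards [nhdsWithin_le_nhds (eventually_lt_nhds ha)] with t ht
  simp [ht.le]

lemma locallyIntegrable_indicator_Ioi (hf : LocallyIntegrableOn f (Ici a)) :
    LocallyIntegrable ((Ioi a).indicator f) := fun t => by
  rcases le_or_gt a t with hat | hta
  · obtain ⟨v, hv, hint⟩ := hf t hat
    obtain ⟨u, hu, huv⟩ := mem_nhdsWithin_iff_exists_mem_nhds_inter.mp hv
    refine ⟨u, hu, ?_⟩
    rw [integrableOn_indicator_iff measurableSet_Ioi, inter_comm]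
    exact hint.mono_set ((inter_subset_inter_right u Ioi_subset_Ici_self).trans huv)
  · refine ⟨Iio a, Iio_mem_nhds hta, ?_⟩
    rw [integrableOn_indicator_iff measurableSet_Ioi, Ioi_inter_Iio, Ioo_self]
    exact integrableOn_empty

lemma mellinConvergent_indicator_Ioi_of_isBigO {β : ℝ} (hf : LocallyIntegrableOn f (Ici a))
    (ha : 0 < a) (hO : f =O[atTop] fun t => t ^ β) (hs : s.re < -β) :
    MellinConvergent ((Ioi a).indicator f) s :=
  mellinConvergent_of_isBigO_rpow
    ((locallyIntegrable_indicator_Ioi hf).locallyIntegrableOn _) (isBigO_indicator_Ioi_atTop hO) hs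
    (isBigO_indicator_Ioi_nhdsWithin_zero ha _) (sub_one_lt s.re)

lemma differentiableAt_mellin_indicator_Ioi {β : ℝ} (hf : LocallyIntegrableOn f (Ici a))
    (ha : 0 < a) (hO : f =O[atTop] fun t => t ^ β) (hs : s.re < -β) :
    DifferentiableAt ℂ (mellin ((Ioi a).indicator f)) s :=
  mellin_differentiableAt_of_isBigO_rpow
    ((locallyIntegrable_indicator_Ioi hf).locallyIntegrableOn _) (isBigO_indicator_Ioi_atTop hO) hs
    (isBigO_indicator_Ioi_nhdsWithin_zero ha _) (sub_one_lt s.re)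

lemma integral_Ioi_norm_cpow {c : ℝ} (hc : 0 < c) (hs : s.re < 0) :
    ∫ t in Ioi c, ‖(t : ℂ) ^ (s - 1)‖ = ‖(c : ℂ) ^ s‖ / -s.re := by
  have h : ∀ t ∈ Ioi c, ‖(t : ℂ) ^ (s - 1)‖ = t ^ (s.re - 1) := fun t ht => by
    simp [norm_cpow_eq_rpow_re_of_pos (hc.trans ht)]
  rw [setIntegral_congr_fun measurableSet_Ioi h, integral_Ioi_rpow_of_lt (by linarith) hc,
    norm_cpow_eq_rpow_re_of_pos hc, sub_add_cancel, div_neg, neg_div]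

lemma integrable_indicator_le_cpow_mul (ha : 0 < a) (hs : s.re < 0)
    (hf : IntegrableOn (fun t : ℝ => (t : ℂ) ^ s * f t) (Ioi a)) :
    Integrable ({p : ℝ × ℝ | p.2 ≤ p.1}.indicator fun p => (p.1 : ℂ) ^ (s - 1) * f p.2)
      ((volume.restrict (Ioi a)).prod (volume.restrict (Ioi a))) := by
  have hmeas : AEStronglyMeasurable f (volume.restrict (Ioi a)) := by
    have hpow : AEStronglyMeasurable (fun t : ℝ => (t : ℂ) ^ (-s)) (volume.restrict (Ioi a)) :=
      (by fun_prop : Measurable fun t : ℝ => (t : ℂ) ^ (-s)).aestronglyMeasurable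
    refine (hpow.mul hf.aestronglyMeasurable).congr ?_
    filter_upwards [ae_restrict_mem measurableSet_Ioi] with t ht
    have ht0 : (t : ℂ) ≠ 0 := ofReal_ne_zero.mpr (ha.trans ht).ne'
    simp [cpow_neg, ht0]
  have hslice (v : ℝ) : (fun t => {p : ℝ × ℝ | p.2 ≤ p.1}.indicator
      (fun p => (p.1 : ℂ) ^ (s - 1) * f p.2) (t, v)) =
      (Ici v).indicator fun t : ℝ => (t : ℂ) ^ (s - 1) * f v := rfl
  have hinter {v : ℝ} (hv : v ∈ Ioi a) : Ici v ∩ Ioi a = Ici v :=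
    inter_eq_left.mpr (Ici_subset_Ioi.mpr hv)
  rw [integrable_prod_iff']
  · constructor
    · filter_upwards [ae_restrict_mem measurableSet_Ioi] with v hv
      rw [hslice, ← IntegrableOn, integrableOn_indicator_iff measurableSet_Ici, hinter hv,
        integrableOn_Ici_iff_integrableOn_Ioi]
      exact (integrableOn_Ioi_cpow_of_lt (by simp; linarith) (ha.trans hv)).mul_const _
    · refine (hf.norm.div_const (-s.re)).congr ?_
      filter_upwards [ae_restrict_mem measurableSet_Ioi] with v hv
      simp_rw [congrFun (hslice v), norm_indicator_eq_indicator_norm, norm_mul]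
      rw [setIntegral_indicator measurableSet_Ici, inter_comm, hinter hv,
        integral_Ici_eq_integral_Ioi, integral_mul_const, integral_Ioi_norm_cpow (ha.trans hv) hs]
      ring
  · have hpow : Measurable fun p : ℝ × ℝ => (p.1 : ℂ) ^ (s - 1) := by fun_prop
    exact (hpow.aestronglyMeasurable.mul hmeas.comp_snd).indicator
      (measurableSet_le measurable_snd measurable_fst)

lemma hasMellin_indicator_Ioi_primitive {m : ℂ} (ha : 0 < a) (hs : s.re < 0)
    (hf : HasMellin ((Ioi a).indicator f) (s + 1) m) :
    HasMellin ((Ioi a).indicator fun t => ∫ v in a..t, f v) s (-m / s) := by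
  obtain ⟨hconv, hm⟩ := hf
  rw [mellinConvergent_indicator_Ioi ha.le, add_sub_cancel_right] at hconv
  rw [mellin_indicator_Ioi ha.le, add_sub_cancel_right] at hm
  have hint := integrable_indicator_le_cpow_mul ha hs hconv
  have hinner : ∀ t ∈ Ioi a, ∫ v in Ioi a, {p : ℝ × ℝ | p.2 ≤ p.1}.indicator
      (fun p => (p.1 : ℂ) ^ (s - 1) * f p.2) (t, v) =
      (t : ℂ) ^ (s - 1) * ∫ v in a..t, f v := fun t ht => by
    change ∫ v in Ioi a, (Iic t).indicator (fun v => (t : ℂ) ^ (s - 1) * f v) v = _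
    rw [setIntegral_indicator measurableSet_Iic, Ioi_inter_Iic, integral_const_mul,
      intervalIntegral.integral_of_le (le_of_lt ht)]
  have houter : ∀ v ∈ Ioi a, ∫ t in Ioi a, {p : ℝ × ℝ | p.2 ≤ p.1}.indicator
      (fun p => (p.1 : ℂ) ^ (s - 1) * f p.2) (t, v) =
      (v : ℂ) ^ s * f v * (-1 / s) := fun v hv => by
    change ∫ t in Ioi a, (Ici v).indicator (fun t : ℝ => (t : ℂ) ^ (s - 1) * f v) t = _
    rw [setIntegral_indicator measurableSet_Ici, inter_comm,
      inter_eq_left.mpr (Ici_subset_Ioi.mpr hv), integral_Ici_eq_integral_Ioi, integral_mul_const,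
      integral_Ioi_cpow_of_lt (by simp; linarith) (ha.trans hv), sub_add_cancel]
    ring
  constructor
  · rw [mellinConvergent_indicator_Ioi ha.le]
    refine hint.integral_prod_left.congr ?_
    filter_upwards [ae_restrict_mem measurableSet_Ioi] using hinner
  · rw [mellin_indicator_Ioi ha.le, ← setIntegral_congr_fun measurableSet_Ioi hinner,
      integral_integral_swap (f := fun t v => {p : ℝ × ℝ | p.2 ≤ p.1}.indicator
        (fun p => (p.1 : ℂ) ^ (s - 1) * f p.2) (t, v)) hint,
      setIntegral_congr_fun measurableSet_Ioi houter, integral_mul_const, hm]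
    ring

lemma locallyIntegrable_ofReal {g : ℝ → ℝ} (hg : LocallyIntegrable g) :
    LocallyIntegrable fun t => (g t : ℂ) := fun t =>
  (hg t).imp fun _ h => ⟨h.1, h.2.ofReal⟩

lemma hasMellin_indicator_Ioi_one_id (hs : s.re < -1) :
    HasMellin ((Ioi 1).indicator fun t : ℝ => (t : ℂ)) s (-1 / (s + 1)) := by
  have hpow : ∀ t ∈ Ioi (1 : ℝ), (t : ℂ) ^ s = (t : ℂ) ^ (s - 1) * t := fun t ht => by
    have ht0 : (t : ℂ) ≠ 0 := ofReal_ne_zero.mpr (zero_lt_one.trans ht).ne'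
    rw [cpow_sub _ _ ht0, cpow_one, div_mul_cancel₀ _ ht0]
  constructor
  · rw [mellinConvergent_indicator_Ioi zero_le_one]
    exact (integrableOn_Ioi_cpow_of_lt hs one_pos).congr_fun hpow measurableSet_Ioi
  · rw [mellin_indicator_Ioi zero_le_one, ← setIntegral_congr_fun measurableSet_Ioi hpow,
      integral_Ioi_cpow_of_lt hs one_pos, ofReal_one, one_cpow]

lemma hasMellin_indicator_Ioi_one_summatory {c : ℕ → ℝ} (hc : ∀ n, 0 ≤ c n)
    (hO : (fun n : ℕ => ∑ k ∈ Finset.Icc 1 n, c k) =O[atTop] fun n => (n : ℝ)) (hs : 1 < s.re) :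
    HasMellin ((Ioi 1).indicator fun t : ℝ => ((∑ k ∈ Finset.Icc 1 ⌊t⌋₊, c k : ℝ) : ℂ)) (-s)
      (LSeries (fun n => c n) s / s) := by
  have hs0 : s ≠ 0 := by rintro rfl; norm_num at hs
  have hmono : Monotone fun t : ℝ => ∑ k ∈ Finset.Icc 1 ⌊t⌋₊, c k := fun t u htu =>
    Finset.sum_le_sum_of_subset_of_nonneg
      (Finset.Icc_subset_Icc_right (Nat.floor_mono htu)) fun k _ _ => hc k
  have hfloor : (fun t : ℝ => (⌊t⌋₊ : ℝ)) =O[atTop] fun t => t ^ (1 : ℝ) :=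
    .of_norm_eventuallyLE <| (eventually_ge_atTop 0).mono fun t ht => by
      simpa using Nat.floor_le ht
  constructor
  · refine mellinConvergent_indicator_Ioi_of_isBigO
      ((locallyIntegrable_ofReal hmono.locallyIntegrable).locallyIntegrableOn _) one_pos
      (isBigO_ofReal_left.mpr ((hO.comp_tendsto tendsto_nat_floor_atTop).trans hfloor)) ?_
    simpa using hs
  · rw [LSeries_eq_mul_integral_of_nonneg c zero_le_one hs (by simpa using hO) hc,
      mellin_indicator_Ioi zero_le_one, mul_div_cancel_left₀ _ hs0]
    refine setIntegral_congr_fun measurableSet_Ioi fun t _ => ?_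
    simp only [ofReal_sum]
    ring_nf

lemma hasMellin_indicator_Ioi_one_summatory_sub_id {c : ℕ → ℝ} (hc : ∀ n, 0 ≤ c n)
    (hO : (fun n : ℕ => ∑ k ∈ Finset.Icc 1 n, c k) =O[atTop] fun n => (n : ℝ)) (hs : 1 < s.re) :
    HasMellin ((Ioi 1).indicator fun t : ℝ => ((∑ k ∈ Finset.Icc 1 ⌊t⌋₊, c k - t : ℝ) : ℂ)) (-s)
      (LSeries (fun n => c n) s / s - 1 / (s - 1)) := by
  have hid := hasMellin_indicator_Ioi_one_id (s := -s) (by simpa using hs)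
  convert hasMellin_sub (hasMellin_indicator_Ioi_one_summatory hc hO hs).1 hid.1 using 2
  · simp only [ofReal_sub, indicator_sub]
  · exact (hasMellin_indicator_Ioi_one_summatory hc hO hs).2.symm
  · rw [hid.2, neg_div, ← div_neg, neg_add_rev, neg_neg, neg_add_eq_sub]

end Mellin

section LogDeriv

open Complex Metric Set

variable {f : ℂ → ℂ} {c : ℂ} {R : ℝ}

lemma exists_eq_mul_exp_of_ne_zero (hf : DifferentiableOn ℂ f (ball c R))
    (hf0 : ∀ z ∈ ball c R, f z ≠ 0) :
    ∃ g : ℂ → ℂ, g c = 0 ∧ (∀ z ∈ ball c R, HasDerivAt g (logDeriv f z) z) ∧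
      ∀ z ∈ ball c R, f z = f c * exp (g z) := by
  have hderiv : DifferentiableOn ℂ (logDeriv f) (ball c R) := (hf.deriv isOpen_ball).div hf hf0
  obtain ⟨g, hgc, hg⟩ := hderiv.isExactOn_ball.with_val_at c 0
  have hquot : ∀ z ∈ ball c R, HasDerivAt (fun z => f z * exp (-g z)) 0 z := fun z hz => by
    have hfz := (hf.differentiableAt (isOpen_ball.mem_nhds hz)).hasDerivAt
    refine (hfz.mul (hg z hz).neg.cexp).congr_deriv ?_
    rw [logDeriv_apply]
    field_simp [hf0 z hz]
    ring
  refine ⟨g, hgc, hg, fun z hz => ?_⟩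
  have hc : c ∈ ball c R := mem_ball_self (pos_of_mem_ball hz)
  have hconst : f z * exp (-g z) = f c * exp (-g c) :=
    (convex_ball c R).is_const_of_fderivWithin_eq_zero (𝕜 := ℂ)
      (fun w hw => (hquot w hw).differentiableAt.differentiableWithinAt)
      (fun w hw => by
        rw [fderivWithin_of_isOpen isOpen_ball hw, (hquot w hw).hasFDerivAt.fderiv]
        ext
        simp) hz hc
  rw [hgc, neg_zero, exp_zero, mul_one] at hconst
  rw [← hconst, mul_assoc, ← exp_add, neg_add_cancel, exp_zero, mul_one]

lemma norm_le_of_re_le_of_center_eq_zero {g : ℂ → ℂ} {M ρ : ℝ} (hM : 0 < M)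
    (hg : DifferentiableOn ℂ g (ball c R)) (hgc : g c = 0) (hre : ∀ z ∈ ball c R, (g z).re ≤ M)
    (hρ : ρ < R) {z : ℂ} (hz : z ∈ closedBall c ρ) : ‖g z‖ ≤ 2 * M * R / (R - ρ) := by
  rw [mem_closedBall_iff_norm] at hz
  have hR : 0 < R := ((norm_nonneg _).trans hz).trans_lt hρ
  have hmaps : MapsTo (fun w => w + c) (ball 0 R) (ball c R) := fun w hw => by
    simpa [dist_eq_norm] using hw
  have h := borelCaratheodory_zero hM (hg.comp (by fun_prop) hmaps)
    (fun w hw => hre _ (hmaps hw)) hR (z := z - c) (by simpa using hz.trans_lt hρ) (by simpa)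
  simp only [Function.comp_apply, sub_add_cancel] at h
  refine h.trans ?_
  gcongr
  linarith

lemma norm_logDeriv_le_of_norm_le_exp_mul {M r : ℝ} (hf : DifferentiableOn ℂ f (ball c R))
    (hf0 : ∀ z ∈ ball c R, f z ≠ 0) (hM : 0 < M)
    (hbound : ∀ z ∈ ball c R, ‖f z‖ ≤ Real.exp M * ‖f c‖) (hr : r < R) {z : ℂ}
    (hz : z ∈ closedBall c r) : ‖logDeriv f z‖ ≤ 8 * M * R / (R - r) ^ 2 := by
  obtain ⟨g, hgc, hg, hexp⟩ := exists_eq_mul_exp_of_ne_zero hf hf0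
  have hgd : DifferentiableOn ℂ g (ball c R) := fun w hw =>
    (hg w hw).differentiableAt.differentiableWithinAt
  have hre : ∀ w ∈ ball c R, (g w).re ≤ M := fun w hw => by
    have hfc : 0 < ‖f c‖ := norm_pos_iff.mpr (hf0 c (mem_ball_self (pos_of_mem_ball hw)))
    have := hbound w hw
    rw [hexp w hw, norm_mul, norm_exp, mul_comm] at this
    exact Real.exp_le_exp.mp (le_of_mul_le_mul_right this hfc)
  have hsub : closedBall z ((R - r) / 2) ⊆ closedBall c ((R + r) / 2) :=
    closedBall_subset_closedBall' (by rw [mem_closedBall] at hz; linarith)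
  have hsubR : closedBall c ((R + r) / 2) ⊆ ball c R := closedBall_subset_ball (by linarith)
  have hcauchy := norm_deriv_le_of_forall_mem_sphere_norm_le (f := g) (c := z)
    (C := 2 * M * R / (R - (R + r) / 2)) (half_pos (sub_pos.mpr hr))
    (DifferentiableOn.diffContOnCl_ball (hgd.mono hsubR) hsub)
    fun w hw => norm_le_of_re_le_of_center_eq_zero hM hgd hgc hre (by linarith)
      (hsub (sphere_subset_closedBall hw))
  rw [(hg z (closedBall_subset_ball hr hz)).deriv] at hcauchy
  refine hcauchy.trans_eq ?_
  rw [show R - (R + r) / 2 = (R - r) / 2 by ring]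
  field_simp [(sub_pos.mpr hr).ne']
  ring

end LogDeriv

section Zeta

open Complex Set MeasureTheory Topology Asymptotics Metric

lemma hasMellin_floor_sub_id {s : ℂ} (hs : 1 < s.re) :
    HasMellin ((Ioi 1).indicator fun t : ℝ => ((⌊t⌋₊ - t : ℝ) : ℂ)) (-s)
      (riemannZeta s / s - 1 / (s - 1)) := by
  have h := hasMellin_indicator_Ioi_one_summatory_sub_id (c := fun _ => 1)
    (fun _ => zero_le_one) (by simpa using isBigO_refl _ _) hs
  have hL : LSeries (fun _ => ((1 : ℝ) : ℂ)) s = riemannZeta s := by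
    rw [ofReal_one]
    exact LSeries_one_eq_riemannZeta hs
  rw [hL] at h
  simpa using h

lemma abs_floor_sub_id_le {t : ℝ} (ht : 0 ≤ t) : |(⌊t⌋₊ : ℝ) - t| ≤ 1 := by
  rw [abs_le]
  constructor <;> linarith [Nat.floor_le ht, Nat.lt_floor_add_one t]

lemma locallyIntegrable_floor_sub_id : LocallyIntegrable fun t : ℝ => (⌊t⌋₊ - t : ℝ) :=
  (Monotone.locallyIntegrable fun _ _ h => Nat.cast_le.mpr (Nat.floor_mono h)).sub
    continuous_id.locallyIntegrable

lemma differentiableAt_mellin_floor_sub_id {s : ℂ} (hs : s.re < 0) :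
    DifferentiableAt ℂ (mellin ((Ioi 1).indicator fun t : ℝ => ((⌊t⌋₊ - t : ℝ) : ℂ))) s := by
  refine differentiableAt_mellin_indicator_Ioi (β := 0)
    ((locallyIntegrable_ofReal locallyIntegrable_floor_sub_id).locallyIntegrableOn _) one_pos ?_
    (by simpa using hs)
  refine .of_bound 1 ((eventually_ge_atTop 0).mono fun t ht => ?_)
  rw [norm_real, Real.norm_eq_abs, Real.rpow_zero, norm_one, mul_one]
  exact abs_floor_sub_id_le ht

lemma riemannZeta₁_eq_sub_one_mul {s : ℂ} (hs : s ≠ 1) :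
    riemannZeta₁ s = (s - 1) * riemannZeta s := by
  rw [riemannZeta_eq_inv_sub_mul hs, mul_inv_cancel_left₀ (sub_ne_zero.mpr hs)]

lemma riemannZeta₁_eq_mellin_floor {s : ℂ} (hs : 0 < s.re) :
    riemannZeta₁ s = s + s * (s - 1) *
      mellin ((Ioi 1).indicator fun t : ℝ => ((⌊t⌋₊ - t : ℝ) : ℂ)) (-s) := by
  have hopen : IsOpen {z : ℂ | 0 < z.re} := isOpen_lt continuous_const continuous_re
  have hdiff : DifferentiableOn ℂ (fun z => z + z * (z - 1) *
      mellin ((Ioi 1).indicator fun t : ℝ => ((⌊t⌋₊ - t : ℝ) : ℂ)) (-z)) {z | 0 < z.re} := by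
    intro z hz
    have := (differentiableAt_mellin_floor_sub_id (s := -z) (by simpa using hz)).comp z
      differentiableAt_id.neg
    exact (differentiableAt_id.add (((differentiableAt_id.mul
      (differentiableAt_id.sub_const 1))).mul this)).differentiableWithinAt
  refine (differentiable_riemannZeta₁.differentiableOn.analyticOnNhd hopen)
    |>.eqOn_of_preconnected_of_eventuallyEq (hdiff.analyticOnNhd hopen)
    (convex_halfSpace_re_gt 0).isPreconnected (z₀ := 2) (by simp) ?_ hs
  filter_upwards [(isOpen_lt continuous_const continuous_re).mem_nhds
    (show (1 : ℝ) < (2 : ℂ).re by simp)] with z (hz : 1 < z.re)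
  have hz0 : z ≠ 0 := by rintro rfl; norm_num at hz
  have hz1 : z ≠ 1 := by rintro rfl; simp at hz
  rw [(hasMellin_floor_sub_id hz).2, riemannZeta₁_eq_sub_one_mul hz1]
  field_simp [sub_ne_zero.mpr hz1]
  ring

lemma norm_mellin_floor_sub_id_le {s : ℂ} (hs : 0 < s.re) :
    ‖mellin ((Ioi 1).indicator fun t : ℝ => ((⌊t⌋₊ - t : ℝ) : ℂ)) (-s)‖ ≤ 1 / s.re := by
  have hneg : (-s).re < 0 := by simpa using hs
  rw [mellin_indicator_Ioi zero_le_one]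
  calc _ ≤ ∫ t in Ioi (1 : ℝ), ‖(t : ℂ) ^ (-s - 1)‖ := by
        refine norm_integral_le_of_norm_le
          (integrableOn_Ioi_cpow_of_lt (by rw [sub_re, one_re]; linarith) one_pos).norm ?_
        filter_upwards [ae_restrict_mem measurableSet_Ioi] with t ht
        rw [norm_mul, norm_real, Real.norm_eq_abs]
        exact mul_le_of_le_one_right (norm_nonneg _)
          (abs_floor_sub_id_le (zero_le_one.trans (le_of_lt ht)))
    _ = 1 / s.re := by rw [integral_Ioi_norm_cpow one_pos hneg]; simp

lemma norm_riemannZeta₁_le {s : ℂ} (hs : 0 < s.re) :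
    ‖riemannZeta₁ s‖ ≤ ‖s‖ + ‖s‖ * ‖s - 1‖ / s.re := by
  rw [riemannZeta₁_eq_mellin_floor hs]
  refine (norm_add_le _ _).trans ?_
  rw [norm_mul, norm_mul, div_eq_mul_one_div]
  gcongr
  exact norm_mellin_floor_sub_id_le hs

lemma norm_inv_riemannZeta_le {s : ℂ} (hs : 1 < s.re) :
    ‖(riemannZeta s)⁻¹‖ ≤ ∑' n : ℕ, 1 / (n : ℝ) ^ s.re := by
  have hinv : (riemannZeta s)⁻¹ = LSeries (fun n => (ArithmeticFunction.moebius n : ℂ)) s := by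
    rw [← ArithmeticFunction.LSeries_zeta_eq_riemannZeta hs]
    exact (eq_inv_of_mul_eq_one_right
      (ArithmeticFunction.LSeries_zeta_mul_Lseries_moebius hs)).symm
  rw [hinv]
  refine tsum_of_norm_bounded (Real.summable_one_div_nat_rpow.mpr hs).hasSum fun n => ?_
  rw [LSeries.norm_term_eq]
  split_ifs with hn
  · positivity
  · gcongr
    exact_mod_cast ArithmeticFunction.abs_moebius_le_one

lemma half_le_norm_riemannZeta₁ {s : ℂ} (hs : s.re = 2) : 1 / 2 ≤ ‖riemannZeta₁ s‖ := by
  have hs1 : s ≠ 1 := by rintro rfl; norm_num at hs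
  have hinv : ‖(riemannZeta s)⁻¹‖ ≤ 2 := by
    refine (norm_inv_riemannZeta_le (by linarith)).trans ?_
    rw [hs, tsum_congr fun n : ℕ => by rw [Real.rpow_two], hasSum_zeta_two.tsum_eq]
    nlinarith [Real.pi_lt_d2, Real.pi_pos]
  have hsub : 1 ≤ ‖s - 1‖ := (abs_re_le_norm (s - 1)).trans' (by norm_num [hs])
  have hζ : 0 < ‖riemannZeta s‖ :=
    norm_pos_iff.mpr (riemannZeta_ne_zero_of_one_lt_re (by linarith))
  rw [norm_inv, inv_le_comm₀ hζ two_pos] at hinv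
  rw [riemannZeta₁_eq_sub_one_mul hs1, norm_mul, one_div]
  exact hinv.trans (le_mul_of_one_le_left hζ.le hsub)

lemma riemannZeta₁_ne_zero {s : ℂ} (hs : riemannZeta s ≠ 0) : riemannZeta₁ s ≠ 0 := by
  rcases eq_or_ne s 1 with rfl | h1
  · simp
  · rw [riemannZeta₁_eq_sub_one_mul h1]
    exact mul_ne_zero (sub_ne_zero.mpr h1) hs

end Zeta

section Kernel

open Complex Set MeasureTheory Topology Asymptotics Metric

variable {θ σ₀ : ℝ}

lemma norm_riemannZeta₁_le_three_mul_sq {z : ℂ} {τ : ℝ} (hz : 1 / 2 ≤ z.re)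
    (hτ : ‖z - 1‖ + 1 ≤ τ) : ‖riemannZeta₁ z‖ ≤ 3 * τ ^ 2 := by
  have hτ1 : 1 ≤ τ := by linarith [norm_nonneg (z - 1)]
  have hz0 : ‖z‖ ≤ τ := by simpa using (norm_le_norm_sub_add z 1).trans (by simpa using hτ)
  refine (norm_riemannZeta₁_le (by linarith)).trans ?_
  calc ‖z‖ + ‖z‖ * ‖z - 1‖ / z.re ≤ τ + τ * τ / (1 / 2) := by gcongr; linarith
    _ ≤ 3 * τ ^ 2 := by nlinarith

lemma exists_norm_logDeriv_riemannZeta₁_le (hθ : 1 / 2 ≤ θ)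
    (hζ : ∀ z : ℂ, θ < z.re → riemannZeta z ≠ 0) (hσ₀ : θ < σ₀) :
    ∃ C : ℝ, ∀ s : ℂ, σ₀ ≤ s.re → s.re ≤ 2 →
      ‖logDeriv riemannZeta₁ s‖ ≤ C * Real.log (4 + |s.im|) := by
  refine ⟨8 * 4 * (2 - θ) / (σ₀ - θ) ^ 2, fun s hs hs2 => ?_⟩
  set τ := 4 + |s.im|
  have hτ4 : 4 ≤ τ := le_add_of_nonneg_right (abs_nonneg _)
  let c : ℂ := ⟨2, s.im⟩
  have hc : ‖c - 1‖ ≤ 1 + |s.im| := (norm_le_abs_re_add_abs_im _).trans (by norm_num [c])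
  have hgrowth : ∀ z ∈ ball c (2 - θ), θ < z.re ∧ ‖riemannZeta₁ z‖ ≤ 3 * τ ^ 2 := fun z hz => by
    rw [mem_ball_iff_norm] at hz
    have hre : θ < z.re := by
      have := (abs_le.mp (abs_re_le_norm (z - c))).1
      simp only [sub_re, c] at this
      linarith
    refine ⟨hre, norm_riemannZeta₁_le_three_mul_sq (hθ.trans hre.le) ?_⟩
    linarith [norm_sub_le_norm_sub_add_norm_sub z c 1]
  have hM : 0 < Real.log (τ ^ 4) := Real.log_pos (one_lt_pow₀ (by linarith) (by norm_num))
  have hbound : ∀ z ∈ ball c (2 - θ),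
      ‖riemannZeta₁ z‖ ≤ Real.exp (Real.log (τ ^ 4)) * ‖riemannZeta₁ c‖ := fun z hz => by
    rw [Real.exp_log (by positivity)]
    calc ‖riemannZeta₁ z‖ ≤ 3 * τ ^ 2 := (hgrowth z hz).2
      _ ≤ τ ^ 4 * (1 / 2) := by
        have : 6 ≤ τ ^ 2 := by nlinarith
        nlinarith
      _ ≤ τ ^ 4 * ‖riemannZeta₁ c‖ := by gcongr; exact half_le_norm_riemannZeta₁ rfl
  have hsc : s ∈ closedBall c (2 - σ₀) := by
    rw [mem_closedBall_iff_norm]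
    refine (norm_le_abs_re_add_abs_im _).trans ?_
    simp only [sub_re, sub_im, c, sub_self, abs_zero, add_zero]
    rw [abs_of_nonpos (by linarith)]
    linarith
  refine (norm_logDeriv_le_of_norm_le_exp_mul differentiable_riemannZeta₁.differentiableOn
    (fun z hz => riemannZeta₁_ne_zero (hζ z (hgrowth z hz).1)) hM hbound (by linarith) hsc).trans_eq
    ?_
  rw [Real.log_pow]
  ring

lemma log_four_add_le_rpow {ε t : ℝ} (hε : 0 < ε) (ht : 0 ≤ t) :
    Real.log (4 + t) ≤ 4 ^ ε / ε * (1 + t) ^ ε := by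
  calc Real.log (4 + t) ≤ (4 + t) ^ ε / ε := Real.log_le_rpow_div (by positivity) hε
    _ ≤ (4 * (1 + t)) ^ ε / ε := by gcongr; linarith
    _ = 4 ^ ε / ε * (1 + t) ^ ε := by rw [Real.mul_rpow (by norm_num) (by positivity)]; ring

/-- The function `-(ζ₁'/ζ₁ + 1) / (s (s + 1))`, where `ζ₁ s = (s - 1) ζ s`. It continues the Mellin
transform of `x ↦ ∫₁ˣ (ψ u - u) du`, evaluated at `-(s + 1)`. -/
noncomputable def psiErrorKernel (s : ℂ) : ℂ :=
  -(logDeriv riemannZeta₁ s + 1) / (s * (s + 1))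

lemma one_add_abs_im_sq_le_norm_mul {s : ℂ} (hs : 1 / 2 ≤ s.re) :
    (1 + |s.im|) ^ 2 ≤ 9 * ‖s * (s + 1)‖ := by
  have hre : 1 / 2 ≤ ‖s‖ := hs.trans (re_le_norm s)
  have him := abs_im_le_norm s
  have hre' : 1 ≤ ‖s + 1‖ := (re_le_norm (s + 1)).trans' (by rw [add_re, one_re]; linarith)
  have him' : |s.im| ≤ ‖s + 1‖ := by simpa using abs_im_le_norm (s + 1)
  rw [norm_mul, sq]
  calc (1 + |s.im|) * (1 + |s.im|) ≤ (3 * ‖s‖) * (3 * ‖s + 1‖) := by gcongr <;> linarith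
    _ = 9 * (‖s‖ * ‖s + 1‖) := by ring

lemma exists_norm_psiErrorKernel_le (hθ : 1 / 2 ≤ θ)
    (hζ : ∀ z : ℂ, θ < z.re → riemannZeta z ≠ 0) (hσ₀ : θ < σ₀) {ε : ℝ} (hε : 0 < ε) :
    ∃ C : ℝ, ∀ s : ℂ, σ₀ ≤ s.re → s.re ≤ 2 →
      ‖psiErrorKernel s‖ ≤ C * (1 + |s.im|) ^ (ε - 2) := by
  obtain ⟨C, hC⟩ := exists_norm_logDeriv_riemannZeta₁_le hθ hζ hσ₀
  refine ⟨9 * ((|C| + 1) * (4 ^ ε / ε)), fun s hs hs2 => ?_⟩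
  have hlog : 1 ≤ Real.log (4 + |s.im|) := by
    rw [Real.le_log_iff_exp_le (by positivity)]
    linarith [Real.exp_one_lt_d9, abs_nonneg s.im]
  have hnum : ‖-(logDeriv riemannZeta₁ s + 1)‖ ≤
      (|C| + 1) * (4 ^ ε / ε) * (1 + |s.im|) ^ ε := by
    rw [norm_neg]
    calc _ ≤ ‖logDeriv riemannZeta₁ s‖ + ‖(1 : ℂ)‖ := norm_add_le _ _
      _ ≤ |C| * Real.log (4 + |s.im|) + Real.log (4 + |s.im|) := by
        rw [norm_one]
        gcongr
        exact (hC s hs hs2).trans (by gcongr; exact le_abs_self C)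
      _ = (|C| + 1) * Real.log (4 + |s.im|) := by ring
      _ ≤ _ := by
        rw [mul_assoc]
        gcongr
        exact log_four_add_le_rpow hε (abs_nonneg _)
  have hden := one_add_abs_im_sq_le_norm_mul (s := s) (by linarith)
  have hs0 : 0 < ‖s * (s + 1)‖ := by
    have : 0 < (1 + |s.im|) ^ 2 := by positivity
    linarith
  rw [psiErrorKernel, norm_div, div_le_iff₀ hs0, Real.rpow_sub (by positivity), Real.rpow_two]
  refine hnum.trans ?_
  generalize (|C| + 1) * (4 ^ ε / ε) = A at *
  have hA : 0 ≤ A * (1 + |s.im|) ^ ε := (norm_nonneg _).trans hnum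
  rw [← mul_div_assoc, div_mul_eq_mul_div, le_div_iff₀ (by positivity)]
  calc _ ≤ A * (1 + |s.im|) ^ ε * (9 * ‖s * (s + 1)‖) := by gcongr
    _ = _ := by ring

lemma differentiableAt_psiErrorKernel {s : ℂ} (hs : 0 < s.re) (hζ : riemannZeta s ≠ 0) :
    DifferentiableAt ℂ psiErrorKernel s := by
  have hs0 : s ≠ 0 := by rintro rfl; simp at hs
  have hs1 : s + 1 ≠ 0 := fun h => by
    have := congrArg re h
    simp only [add_re, one_re, zero_re] at this
    linarith
  exact (((differentiable_riemannZeta₁.deriv s).div (differentiable_riemannZeta₁ s)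
    (riemannZeta₁_ne_zero hζ)).add_const 1).neg.div
    (differentiableAt_id.mul (differentiableAt_id.add_const 1)) (mul_ne_zero hs0 hs1)

end Kernel

section VerticalLines

open Complex Set MeasureTheory Topology

variable {F : ℂ → ℂ} {a b σ C r : ℝ}

lemma integrable_one_add_abs_rpow (hr : r < -1) : Integrable fun t : ℝ => (1 + |t|) ^ r := by
  simpa using integrable_one_add_norm (E := ℝ) (μ := volume) (r := -r) (by simp; linarith)

lemma verticalIntegrable_of_norm_le (hr : r < -1)
    (hF : ∀ s : ℂ, s.re = σ → DifferentiableAt ℂ F s)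
    (hbound : ∀ s : ℂ, s.re = σ → ‖F s‖ ≤ C * (1 + |s.im|) ^ r) :
    VerticalIntegrable F σ := by
  have hcont : Continuous fun t : ℝ => F (σ + t * I) := continuous_iff_continuousAt.mpr fun t =>
    ContinuousAt.comp (f := fun t : ℝ => (σ + t * I : ℂ)) (hF _ (by simp)).continuousAt
      (by fun_prop)
  refine ((integrable_one_add_abs_rpow hr).const_mul C).mono' hcont.aestronglyMeasurable
    (.of_forall fun t => ?_)
  simpa using hbound (σ + t * I) (by simp)

lemma tendsto_integral_horizontal_zero (hab : a ≤ b) (hr : r < 0) {c : ℝ} (hc : |c| = 1)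
    (hbound : ∀ s : ℂ, a ≤ s.re → s.re ≤ b → ‖F s‖ ≤ C * (1 + |s.im|) ^ r) :
    Tendsto (fun T : ℝ => ∫ y in a..b, F (y + (c * T : ℝ) * I)) atTop (𝓝 0) := by
  have hdecay : Tendsto (fun T : ℝ => C * (1 + T) ^ r * |b - a|) atTop (𝓝 0) := by
    have := (tendsto_rpow_neg_atTop (neg_pos.mpr hr)).comp
      (tendsto_atTop_add_const_left atTop 1 tendsto_id)
    simpa using (this.const_mul C).mul_const |b - a|
  refine squeeze_zero_norm' ?_ hdecay
  filter_upwards [eventually_ge_atTop 0] with T hT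
  refine intervalIntegral.norm_integral_le_of_norm_le_const fun y hy => ?_
  rw [uIoc_of_le hab] at hy
  simpa [abs_mul, hc, abs_of_nonneg hT] using
    hbound (y + (c * T : ℝ) * I) (by simpa using hy.1.le) (by simpa using hy.2)

lemma integral_vertical_eq_integral_vertical (hab : a ≤ b) (hr : r < -1)
    (hF : ∀ s : ℂ, a ≤ s.re → s.re ≤ b → DifferentiableAt ℂ F s)
    (hbound : ∀ s : ℂ, a ≤ s.re → s.re ≤ b → ‖F s‖ ≤ C * (1 + |s.im|) ^ r) :
    ∫ t : ℝ, F (a + t * I) = ∫ t : ℝ, F (b + t * I) := by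
  have hvertical : ∀ σ : ℝ, a ≤ σ → σ ≤ b → Tendsto (fun T : ℝ => ∫ t in (-T)..T, F (σ + t * I))
      atTop (𝓝 (∫ t : ℝ, F (σ + t * I))) := fun σ haσ hσb =>
    intervalIntegral_tendsto_integral
      (verticalIntegrable_of_norm_le hr (fun s hs => hF s (hs ▸ haσ) (hs ▸ hσb))
        fun s hs => hbound s (hs ▸ haσ) (hs ▸ hσb)) tendsto_neg_atTop_atBot tendsto_id
  have hrect : ∀ T : ℝ, (∫ y in a..b, F (y + (-1 * T : ℝ) * I)) -
      (∫ y in a..b, F (y + (1 * T : ℝ) * I)) + I • (∫ t in (-T)..T, F (b + t * I)) -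
      I • (∫ t in (-T)..T, F (a + t * I)) = 0 := fun T => by
    simpa using integral_boundary_rect_eq_zero_of_differentiableOn F (a + (-T : ℝ) * I) (b + T * I)
      fun s hs => by
        have hre : s.re ∈ Icc a b := by simpa [uIcc_of_le hab] using hs.1
        exact (hF s hre.1 hre.2).differentiableWithinAt
  have hhorizontal (c : ℝ) (hc : |c| = 1) :=
    tendsto_integral_horizontal_zero hab (by linarith) hc hbound
  have hlim := (((hhorizontal (-1) (by simp)).sub (hhorizontal 1 (by simp))).add
    ((hvertical b hab le_rfl).const_smul I)).sub ((hvertical a le_rfl hab).const_smul I)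
  have hzero := tendsto_nhds_unique (hlim.congr hrect) tendsto_const_nhds
  simp only [sub_zero, zero_add, smul_eq_mul] at hzero
  exact (mul_left_cancel₀ I_ne_zero (sub_eq_zero.mp hzero)).symm

end VerticalLines

section PsiError

open Complex Set MeasureTheory Topology Asymptotics
open Chebyshev (psi psi_nonneg psi_mono psi_le_const_mul_self)

variable {s : ℂ}

lemma logDeriv_riemannZeta₁ (hs : s ≠ 1) (hζ : riemannZeta s ≠ 0) :
    logDeriv riemannZeta₁ s = 1 / (s - 1) + deriv riemannZeta s / riemannZeta s := by
  have heq : riemannZeta₁ =ᶠ[𝓝 s] fun z => (z - 1) * riemannZeta z :=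
    (eventually_ne_nhds hs).mono fun z hz => riemannZeta₁_eq_sub_one_mul hz
  rw [logDeriv_apply, heq.deriv_eq, heq.eq_of_nhds, ← logDeriv_apply,
    logDeriv_mul (f := fun z => z - 1) s (sub_ne_zero.mpr hs) hζ (by fun_prop)
      (differentiableAt_riemannZeta hs)]
  simp [logDeriv_apply]

lemma psi_eq_sum_Icc_one (x : ℝ) :
    psi x = ∑ n ∈ Finset.Icc 1 ⌊x⌋₊, ArithmeticFunction.vonMangoldt n := rfl

lemma hasMellin_psi_sub_id (hs : 1 < s.re) :
    HasMellin ((Ioi 1).indicator fun t : ℝ => ((psi t - t : ℝ) : ℂ)) (-s)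
      (-(logDeriv riemannZeta₁ s + 1) / s) := by
  have hO : (fun n : ℕ => ∑ k ∈ Finset.Icc 1 n, ArithmeticFunction.vonMangoldt k)
      =O[atTop] fun n => (n : ℝ) :=
    .of_bound (Real.log 4 + 4) <| .of_forall fun n => by
      rw [← Nat.floor_natCast (R := ℝ) n, ← psi_eq_sum_Icc_one, Real.norm_of_nonneg (psi_nonneg _)]
      simpa using psi_le_const_mul_self n.cast_nonneg
  have hs0 : s ≠ 0 := by rintro rfl; norm_num at hs
  have hs1 : s ≠ 1 := by rintro rfl; norm_num at hs
  have hs1' : s - 1 ≠ 0 := sub_ne_zero.mpr hs1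
  have hvalue : -(logDeriv riemannZeta₁ s + 1) / s =
      LSeries (fun n => ArithmeticFunction.vonMangoldt n) s / s - 1 / (s - 1) := by
    rw [ArithmeticFunction.LSeries_vonMangoldt_eq_deriv_riemannZeta_div hs,
      logDeriv_riemannZeta₁ hs1 (riemannZeta_ne_zero_of_one_lt_re hs)]
    field_simp
    ring
  rw [hvalue]
  exact hasMellin_indicator_Ioi_one_summatory_sub_id
    (fun _ => ArithmeticFunction.vonMangoldt_nonneg) hO hs

lemma intervalIntegrable_ofReal {g : ℝ → ℝ} {a b : ℝ} (hg : IntervalIntegrable g volume a b) :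
    IntervalIntegrable (fun t => (g t : ℂ)) volume a b :=
  ⟨hg.1.ofReal, hg.2.ofReal⟩

lemma intervalIntegrable_psi_sub_id (a b : ℝ) :
    IntervalIntegrable (fun t => psi t - t) volume a b :=
  psi_mono.intervalIntegrable.sub intervalIntegral.intervalIntegrable_id

lemma hasMellin_integral_psi_sub_id (hs : 1 < s.re) :
    HasMellin ((Ioi 1).indicator fun t : ℝ => ∫ u in 1..t, ((psi u - u : ℝ) : ℂ)) (-(s + 1))
      (psiErrorKernel s) := by
  convert hasMellin_indicator_Ioi_primitive one_pos (s := -(s + 1)) (by simp; linarith)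
    (m := -(logDeriv riemannZeta₁ s + 1) / s) ?_ using 1
  · rw [psiErrorKernel, neg_div_neg_eq, div_div]
  · simpa using hasMellin_psi_sub_id hs

lemma verticalIntegrable_psiErrorKernel_two : VerticalIntegrable psiErrorKernel 2 := by
  have hζ : ∀ z : ℂ, 1 < z.re → riemannZeta z ≠ 0 := fun _ => riemannZeta_ne_zero_of_one_lt_re
  obtain ⟨C, hC⟩ := exists_norm_psiErrorKernel_le (θ := 1) (σ₀ := 2) (by norm_num) hζ (by norm_num)
    (ε := 1 / 2) (by norm_num)
  exact verticalIntegrable_of_norm_le (by norm_num)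
    (fun s hs => differentiableAt_psiErrorKernel (by simp [hs]) (hζ s (by simp [hs])))
    fun s hs => hC s hs.ge hs.le

lemma integral_psi_sub_id_eq_integral_vertical_two {x : ℝ} (hx : 1 < x) :
    ∫ u in 1..x, ((psi u - u : ℝ) : ℂ) =
      (1 / (2 * Real.pi)) • ∫ t : ℝ,
        (x : ℂ) ^ ((2 + t * I : ℂ) + 1) * psiErrorKernel (2 + t * I) := by
  let D : ℝ → ℂ := fun t => ∫ u in 1..t, ((psi u - u : ℝ) : ℂ)
  have hmellin (t : ℝ) : mellin ((Ioi 1).indicator D) ((-3 : ℝ) + t * I) =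
      psiErrorKernel (2 + (-t : ℝ) * I) := by
    rw [← (hasMellin_integral_psi_sub_id (s := 2 + (-t : ℝ) * I) (by simp)).2]
    congr 1
    push_cast
    ring
  have hconv : MellinConvergent ((Ioi 1).indicator D) (-3 : ℝ) := by
    convert (hasMellin_integral_psi_sub_id (s := 2) (by simp)).1 using 1
    norm_num
  have hint : VerticalIntegrable (mellin ((Ioi 1).indicator D)) (-3) := by
    simp_rw [VerticalIntegrable, hmellin]
    exact verticalIntegrable_psiErrorKernel_two.comp_neg
  have hcont : ContinuousAt ((Ioi 1).indicator D) x := by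
    refine ContinuousAt.congr (f := D) ?_
      ((eventually_gt_nhds hx).mono fun t ht => (indicator_of_mem ht D).symm)
    exact (intervalIntegral.continuous_primitive
      (fun a b => intervalIntegrable_ofReal (intervalIntegrable_psi_sub_id a b)) 1).continuousAt
  have hinv := mellinInv_mellin_eq (-3) _ (zero_lt_one.trans hx) hconv hint hcont
  rw [indicator_of_mem (mem_Ioi.mpr hx), mellinInv] at hinv
  simp_rw [hmellin] at hinv
  refine hinv.symm.trans ?_
  rw [← integral_neg_eq_self]
  congr 2 with t
  rw [smul_eq_mul, neg_neg]
  congr 2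
  push_cast
  ring

variable {θ σ : ℝ}

lemma norm_cpow_mul_psiErrorKernel_le {x C r : ℝ} (hx : 1 ≤ x) (hs : s.re ≤ 2)
    (hbound : ‖psiErrorKernel s‖ ≤ C * (1 + |s.im|) ^ r) :
    ‖(x : ℂ) ^ (s + 1) * psiErrorKernel s‖ ≤ x ^ (3 : ℝ) * C * (1 + |s.im|) ^ r := by
  rw [norm_mul, norm_cpow_eq_rpow_re_of_pos (by linarith), mul_assoc, add_re, one_re]
  gcongr
  linarith

lemma integral_psi_sub_id_eq_integral_vertical (hθ : 1 / 2 ≤ θ)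
    (hζ : ∀ z : ℂ, θ < z.re → riemannZeta z ≠ 0) (hσ : θ < σ) (hσ2 : σ ≤ 2) {x : ℝ} (hx : 1 < x) :
    VerticalIntegrable (fun s => (x : ℂ) ^ (s + 1) * psiErrorKernel s) σ ∧
    ∫ u in 1..x, ((psi u - u : ℝ) : ℂ) =
      (1 / (2 * Real.pi)) • ∫ t : ℝ,
        (x : ℂ) ^ ((σ + t * I : ℂ) + 1) * psiErrorKernel (σ + t * I) := by
  obtain ⟨C, hC⟩ := exists_norm_psiErrorKernel_le hθ hζ hσ (ε := 1 / 2) (by norm_num)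
  have hdiff (s : ℂ) (hs : σ ≤ s.re) :
      DifferentiableAt ℂ (fun s => (x : ℂ) ^ (s + 1) * psiErrorKernel s) s :=
    ((differentiableAt_id.add_const 1).const_cpow (.inl (ofReal_ne_zero.mpr (by linarith)))).mul
      (differentiableAt_psiErrorKernel (by linarith) (hζ s (by linarith)))
  have hbound (s : ℂ) (h1 : σ ≤ s.re) (h2 : s.re ≤ 2) :=
    norm_cpow_mul_psiErrorKernel_le hx.le h2 (hC s h1 h2)
  constructor
  · exact verticalIntegrable_of_norm_le (by norm_num) (fun s hs => hdiff s hs.ge)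
      fun s hs => hbound s hs.ge (hs.trans_le hσ2)
  · rw [integral_psi_sub_id_eq_integral_vertical_two hx, integral_vertical_eq_integral_vertical
      (F := fun s => (x : ℂ) ^ (s + 1) * psiErrorKernel s) hσ2 (by norm_num)
      (fun s hs _ => hdiff s hs) hbound]
    norm_cast

end PsiError

section ChebyshevBound

open Complex Set MeasureTheory Topology Asymptotics
open Chebyshev (psi theta psi_mono)

lemma norm_cpow_add_one_sub_cpow_le_norm_mul {x : ℝ} {w : ℂ} (hx : 0 < x) (hw : 1 ≤ w.re) :
    ‖((x + 1 : ℝ) : ℂ) ^ w - (x : ℂ) ^ w‖ ≤ ‖w‖ * (x + 1) ^ (w.re - 1) := by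
  have hw0 : w ≠ 0 := by rintro rfl; norm_num at hw
  have hderiv : ∀ u ∈ Icc x (x + 1), HasDerivWithinAt (fun u : ℝ => (u : ℂ) ^ w)
      (w * (u : ℂ) ^ (w - 1)) (Icc x (x + 1)) u := fun u hu => by
    have hu0 : (u : ℂ) ∈ slitPlane := ofReal_mem_slitPlane.mpr (hx.trans_le hu.1)
    simpa using
      (((hasDerivAt_id (u : ℂ)).cpow_const (c := w) hu0).comp_ofReal).hasDerivWithinAt
  have hbound : ∀ u ∈ Icc x (x + 1), ‖w * (u : ℂ) ^ (w - 1)‖ ≤ ‖w‖ * (x + 1) ^ (w.re - 1) :=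
    fun u hu => by
    have hu0 : 0 < u := hx.trans_le hu.1
    rw [norm_mul, norm_cpow_eq_rpow_re_of_pos hu0, sub_re, one_re]
    gcongr
    exact hu.2
  simpa using (convex_Icc x (x + 1)).norm_image_sub_le_of_norm_hasDerivWithin_le hderiv hbound
    (left_mem_Icc.mpr (by linarith)) (right_mem_Icc.mpr (by linarith))

lemma min_le_rpow_mul_rpow_one_sub {a b p : ℝ} (ha : 0 < a) (hb : 0 < b) (hp : 0 ≤ p)
    (hp1 : p ≤ 1) : min a b ≤ a ^ p * b ^ (1 - p) := by
  have hm : 0 < min a b := lt_min ha hb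
  calc min a b = min a b ^ p * min a b ^ (1 - p) := by rw [← Real.rpow_add hm]; simp
    _ ≤ a ^ p * b ^ (1 - p) := by
      gcongr
      · exact min_le_left a b
      · exact min_le_right a b

/- Interpolates between the trivial bound, with a factor `x + 1`, and the mean value bound, with a
factor `|im w|`. -/
lemma norm_cpow_add_one_sub_cpow_le {x p : ℝ} {w : ℂ} (hx : 0 < x) (hw : 1 ≤ w.re)
    (hw3 : w.re ≤ 3) (hp : 0 ≤ p) (hp1 : p ≤ 1) :
    ‖((x + 1 : ℝ) : ℂ) ^ w - (x : ℂ) ^ w‖ ≤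
      3 * (x + 1) ^ (w.re - 1 + p) * (1 + |w.im|) ^ (1 - p) := by
  have hx1 : 0 < x + 1 := by linarith
  have htrivial : ‖((x + 1 : ℝ) : ℂ) ^ w - (x : ℂ) ^ w‖ ≤ 3 * (x + 1) ^ (w.re - 1) * (x + 1) := by
    refine (norm_sub_le _ _).trans ?_
    rw [norm_cpow_eq_rpow_re_of_pos hx, norm_cpow_eq_rpow_re_of_pos hx1, mul_assoc,
      ← Real.rpow_add_one hx1.ne', sub_add_cancel]
    have : x ^ w.re ≤ (x + 1) ^ w.re := by gcongr; linarith
    linarith [Real.rpow_nonneg hx1.le w.re]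
  have hmeanValue : ‖((x + 1 : ℝ) : ℂ) ^ w - (x : ℂ) ^ w‖ ≤
      3 * (x + 1) ^ (w.re - 1) * (1 + |w.im|) := by
    refine (norm_cpow_add_one_sub_cpow_le_norm_mul hx hw).trans ?_
    have hnorm := norm_le_abs_re_add_abs_im w
    rw [abs_of_nonneg (by linarith)] at hnorm
    calc ‖w‖ * (x + 1) ^ (w.re - 1) ≤ 3 * (1 + |w.im|) * (x + 1) ^ (w.re - 1) := by
          gcongr
          linarith [abs_nonneg w.im]
      _ = _ := by ring
  calc ‖((x + 1 : ℝ) : ℂ) ^ w - (x : ℂ) ^ w‖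
      ≤ 3 * (x + 1) ^ (w.re - 1) * min (x + 1) (1 + |w.im|) := by
        rw [mul_min_of_nonneg _ _ (by positivity)]
        exact le_min htrivial hmeanValue
    _ ≤ 3 * (x + 1) ^ (w.re - 1) * ((x + 1) ^ p * (1 + |w.im|) ^ (1 - p)) := by
        gcongr
        exact min_le_rpow_mul_rpow_one_sub hx1 (by positivity) hp hp1
    _ = _ := by rw [Real.rpow_add hx1]; ring

variable {θ β : ℝ}

lemma integral_unit_psi_sub_id_eq_integral_vertical (hθ : 1 / 2 ≤ θ)
    (hζ : ∀ z : ℂ, θ < z.re → riemannZeta z ≠ 0) {σ : ℝ} (hσ : θ < σ) (hσ2 : σ ≤ 2) {x : ℝ}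
    (hx : 1 < x) :
    ((∫ u in x..x + 1, (psi u - u) : ℝ) : ℂ) = (1 / (2 * Real.pi)) • ∫ t : ℝ,
      (((x + 1 : ℝ) : ℂ) ^ ((σ + t * I : ℂ) + 1) - (x : ℂ) ^ ((σ + t * I : ℂ) + 1)) *
        psiErrorKernel (σ + t * I) := by
  have formula {y : ℝ} (hy : 1 < y) :=
    integral_psi_sub_id_eq_integral_vertical hθ hζ hσ hσ2 hy
  simp_rw [sub_mul]
  rw [integral_sub (formula (by linarith)).1 (formula hx).1, smul_sub, ← (formula hx).2,
    ← (formula (by linarith)).2, intervalIntegral.integral_ofReal,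
    intervalIntegral.integral_ofReal, ← ofReal_sub, intervalIntegral.integral_interval_sub_left
      (intervalIntegrable_psi_sub_id _ _) (intervalIntegrable_psi_sub_id _ _)]

lemma exists_abs_integral_unit_psi_sub_id_le (hθ : 1 / 2 ≤ θ)
    (hζ : ∀ z : ℂ, θ < z.re → riemannZeta z ≠ 0) (hβ : θ < β) (hβ1 : β < 1) :
    ∃ C : ℝ, ∀ x : ℝ, 1 < x → |∫ u in x..x + 1, (psi u - u)| ≤ C * (x + 1) ^ β := by
  obtain ⟨σ, hσ, hσβ⟩ := exists_between hβ
  set p := β - σ with hp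
  obtain ⟨C, hC⟩ := exists_norm_psiErrorKernel_le hθ hζ hσ (ε := p / 2) (by linarith)
  refine ⟨1 / (2 * Real.pi) * (3 * C * ∫ t : ℝ, (1 + |t|) ^ (-1 - p / 2)), fun x hx => ?_⟩
  have hintegrand (t : ℝ) :
      ‖(((x + 1 : ℝ) : ℂ) ^ ((σ + t * I : ℂ) + 1) - (x : ℂ) ^ ((σ + t * I : ℂ) + 1)) *
        psiErrorKernel (σ + t * I)‖ ≤ 3 * C * (x + 1) ^ β * (1 + |t|) ^ (-1 - p / 2) := by
    have hcpow := norm_cpow_add_one_sub_cpow_le (x := x) (w := σ + t * I + 1) (p := p)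
      (by linarith) (by simp; linarith) (by simp; linarith) (by linarith) (by linarith)
    have hkernel := hC (σ + t * I) (by simp) (by simp; linarith)
    simp only [add_re, add_im, ofReal_re, ofReal_im, re_ofReal_mul, im_ofReal_mul, I_re, I_im,
      one_re, one_im, mul_zero, mul_one, add_zero, zero_add, add_sub_cancel_right] at hcpow hkernel
    rw [norm_mul]
    refine (mul_le_mul hcpow hkernel (norm_nonneg _) (by positivity)).trans_eq ?_
    rw [show σ + p = β by rw [hp]; ring, show -1 - p / 2 = (1 - p) + (p / 2 - 2) by ring,
      Real.rpow_add (by positivity)]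
    ring
  rw [← Real.norm_eq_abs, ← norm_real,
    integral_unit_psi_sub_id_eq_integral_vertical hθ hζ hσ (by linarith) hx, norm_smul,
    Real.norm_of_nonneg (by positivity), mul_assoc]
  gcongr
  refine (norm_integral_le_of_norm_le ((integrable_one_add_abs_rpow (by linarith)).const_mul _)
    (.of_forall hintegrand)).trans_eq ?_
  rw [integral_const_mul]
  ring

lemma isBigO_rpow_add_one (hβ : 0 ≤ β) :
    (fun x : ℝ => (x + 1) ^ β) =O[atTop] fun x => x ^ β := by
  refine .of_bound (2 ^ β) ?_
  filter_upwards [eventually_ge_atTop 1] with x hx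
  rw [Real.norm_of_nonneg (by positivity), Real.norm_of_nonneg (by positivity),
    ← Real.mul_rpow (by norm_num) (by linarith)]
  gcongr
  linarith

lemma sub_id_sub_one_le_integral_of_monotone {f : ℝ → ℝ} (hf : Monotone f) (x : ℝ) :
    f x - x - 1 ≤ ∫ u in x..x + 1, (f u - u) := by
  have := intervalIntegral.integral_mono_on (μ := volume) (by linarith : x ≤ x + 1)
    (intervalIntegrable_const (c := f x - x - 1))
    (hf.intervalIntegrable.sub intervalIntegral.intervalIntegrable_id)
    fun u hu => by linarith [hf hu.1, hu.2]
  simpa using this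

lemma integral_sub_id_le_of_monotone {f : ℝ → ℝ} (hf : Monotone f) (x : ℝ) :
    ∫ u in x..x + 1, (f u - u) ≤ f (x + 1) - x := by
  have := intervalIntegral.integral_mono_on (μ := volume) (by linarith : x ≤ x + 1)
    (hf.intervalIntegrable.sub intervalIntegral.intervalIntegrable_id)
    (intervalIntegrable_const (c := f (x + 1) - x))
    fun u hu => by linarith [hf hu.2, hu.1]
  simpa using this

/- For monotone `f`, the unit integrals starting at `x` and `x - 1` bound `f x - x` from above and
from below. -/
lemma isBigO_sub_id_of_monotone {f : ℝ → ℝ} (hf : Monotone f) (hβ : 0 ≤ β)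
    (hO : (fun x => ∫ u in x..x + 1, (f u - u)) =O[atTop] fun x => x ^ β) :
    (fun x => f x - x) =O[atTop] fun x => x ^ β := by
  have hshift : (fun x => ∫ u in x - 1..x - 1 + 1, (f u - u)) =O[atTop] fun x : ℝ => x ^ β := by
    refine (hO.comp_tendsto (tendsto_atTop_add_const_right atTop (-1) tendsto_id)).trans ?_
    refine .of_norm_eventuallyLE ?_
    filter_upwards [eventually_ge_atTop 1] with x hx
    simp only [Function.comp_apply, id_eq]
    rw [Real.norm_of_nonneg (Real.rpow_nonneg (by linarith) β)]
    gcongr <;> linarith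
  have hone : (fun _ : ℝ => (1 : ℝ)) =O[atTop] fun x => x ^ β := by
    refine .of_norm_eventuallyLE ?_
    filter_upwards [eventually_ge_atTop 1] with x hx
    simpa using Real.one_le_rpow hx hβ
  refine (IsBigO.of_norm_le fun x => ?_).trans ((hO.norm_left.add hshift.norm_left).add hone)
  have hlower := sub_id_sub_one_le_integral_of_monotone hf x
  have hupper := integral_sub_id_le_of_monotone hf (x - 1)
  rw [sub_add_cancel] at hupper
  simp only [Real.norm_eq_abs, sub_add_cancel]
  rw [abs_le]
  constructor <;>
    linarith [neg_abs_le (∫ u in x - 1..x, (f u - u)), le_abs_self (∫ u in x..x + 1, (f u - u)),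
      abs_nonneg (∫ u in x - 1..x, (f u - u)), abs_nonneg (∫ u in x..x + 1, (f u - u))]

lemma isBigO_psi_sub_id (hθ : 1 / 2 ≤ θ) (hζ : ∀ z : ℂ, θ < z.re → riemannZeta z ≠ 0)
    (hβ : θ < β) (hβ1 : β < 1) : (fun x => psi x - x) =O[atTop] fun x => x ^ β := by
  have hβ0 : 0 ≤ β := by linarith
  obtain ⟨C, hC⟩ := exists_abs_integral_unit_psi_sub_id_le hθ hζ hβ hβ1
  refine isBigO_sub_id_of_monotone psi_mono hβ0
    (IsBigO.trans (.of_bound C ?_) (isBigO_rpow_add_one hβ0))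
  filter_upwards [eventually_gt_atTop 1] with x hx
  rw [Real.norm_of_nonneg (Real.rpow_nonneg (by linarith) β)]
  exact hC x hx

lemma isBigO_theta_sub_id (hθ : 1 / 2 ≤ θ) (hζ : ∀ z : ℂ, θ < z.re → riemannZeta z ≠ 0)
    (hβ : θ < β) : (fun x => theta x - x) =O[atTop] fun x => x ^ β := by
  rcases lt_or_ge β 1 with hβ1 | hβ1
  · have hsqrt : Real.sqrt =O[atTop] fun x => x ^ β := by
      refine .of_norm_eventuallyLE ?_
      filter_upwards [eventually_ge_atTop 1] with x hx
      rw [Real.norm_of_nonneg (Real.sqrt_nonneg x), Real.sqrt_eq_rpow]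
      exact Real.rpow_le_rpow_of_exponent_le hx (by linarith)
    refine ((isBigO_psi_sub_id hθ hζ hβ hβ1).sub
      (Chebyshev.isBigO_psi_sub_theta_sqrt.trans hsqrt)).congr_left fun x => ?_
    simp
  · refine .of_bound (Real.log 4 + 1) ?_
    filter_upwards [eventually_ge_atTop 1] with x hx
    have hx0 : 0 ≤ x := by linarith
    have hxβ : x ≤ x ^ β := by simpa using Real.rpow_le_rpow_of_exponent_le hx hβ1
    rw [Real.norm_of_nonneg (Real.rpow_nonneg hx0 β)]
    calc ‖theta x - x‖ ≤ ‖theta x‖ + ‖x‖ := norm_sub_le _ _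
      _ = theta x + x := by
        rw [Real.norm_of_nonneg (Chebyshev.theta_nonneg x), Real.norm_of_nonneg hx0]
      _ ≤ (Real.log 4 + 1) * x := by linarith [Chebyshev.theta_le_log4_mul_x hx0]
      _ ≤ (Real.log 4 + 1) * x ^ β := by gcongr

end ChebyshevBound

section ExpIntegral

open Complex Set MeasureTheory Topology Asymptotics

/-- The entire exponential integral `Ein z = ∫₀ᶻ (1 - exp (-u)) / u du`, given by its power series;
`E₁ z = -γ - log z + Ein z`. -/
noncomputable def expIntegralEin (z : ℂ) : ℂ :=
  -∑' k : ℕ, (-z) ^ (k + 1) / (((k + 1) * Nat.factorial (k + 1) : ℕ) : ℂ)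

lemma expIntegralE1_eq_add_expIntegralEin (z : ℂ) :
    expIntegralE1 z = -(Real.eulerMascheroniConstant : ℂ) - log z + expIntegralEin z := by
  rw [expIntegralEin, ← sub_eq_add_neg, expIntegralE1]

lemma hasDerivAt_expIntegralEin_tsum (z : ℂ) :
    HasDerivAt expIntegralEin (∑' k : ℕ, (-z) ^ k / (Nat.factorial (k + 1) : ℂ)) z := by
  have hterm (k : ℕ) (y : ℂ) :
      HasDerivAt (fun y : ℂ => (-y) ^ (k + 1) / (((k + 1) * Nat.factorial (k + 1) : ℕ) : ℂ))
        (-((-y) ^ k / (Nat.factorial (k + 1) : ℂ))) y := by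
    refine (((hasDerivAt_neg y).fun_pow (k + 1)).div_const _).congr_deriv ?_
    have hk : ((k + 1 : ℕ) : ℂ) ≠ 0 := Nat.cast_ne_zero.mpr k.succ_ne_zero
    have hfact : ((k + 1).factorial : ℂ) ≠ 0 := Nat.cast_ne_zero.mpr (k + 1).factorial_ne_zero
    rw [Nat.cast_mul, add_tsub_cancel_right]
    field_simp
  have hbound (k : ℕ) (y : ℂ) (hy : y ∈ Metric.ball (0 : ℂ) (‖z‖ + 1)) :
      ‖-((-y) ^ k / (Nat.factorial (k + 1) : ℂ))‖ ≤ (‖z‖ + 1) ^ k / (k.factorial : ℝ) := by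
    rw [norm_neg, norm_div, norm_pow, norm_neg, norm_natCast]
    have := (mem_ball_zero_iff.mp hy).le
    gcongr
    exact k.le_succ
  have htsum := (hasDerivAt_tsum_of_isPreconnected
    (Real.summable_pow_div_factorial (‖z‖ + 1)) Metric.isOpen_ball
    (convex_ball _ _).isPreconnected (fun k y _ => hterm k y) hbound (y₀ := 0)
    (Metric.mem_ball_self (by positivity)) (by simp [summable_zero])
    (mem_ball_zero_iff.mpr (lt_add_one _))).neg
  rwa [tsum_neg, neg_neg] at htsum

lemma continuous_expIntegralEin : Continuous expIntegralEin :=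
  continuous_iff_continuousAt.mpr fun z => (hasDerivAt_expIntegralEin_tsum z).continuousAt

lemma expIntegralEin_zero : expIntegralEin 0 = 0 := by
  simp [expIntegralEin]

lemma hasDerivAt_expIntegralEin {z : ℂ} (hz : z ≠ 0) :
    HasDerivAt expIntegralEin ((1 - exp (-z)) / z) z := by
  refine (hasDerivAt_expIntegralEin_tsum z).congr_deriv ?_
  have hexp : HasSum (fun k : ℕ => (-z) ^ k / (k.factorial : ℂ)) (exp (-z)) := by
    rw [exp_eq_exp_ℂ]
    exact NormedSpace.expSeries_div_hasSum_exp (-z)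
  have hshift := ((hasSum_nat_add_iff' 1).mpr hexp).div_const (-z)
  have hcancel (k : ℕ) : (-z) ^ (k + 1) / ((k + 1).factorial : ℂ) / (-z) =
      (-z) ^ k / ((k + 1).factorial : ℂ) := by
    field_simp
    ring
  simp_rw [hcancel] at hshift
  rw [hshift.tsum_eq, ← neg_div_neg_eq]
  simp

lemma hasDerivAt_expIntegralE1 {z : ℂ} (hz : z ∈ slitPlane) :
    HasDerivAt expIntegralE1 (-exp (-z) / z) z := by
  have hz0 := slitPlane_ne_zero hz
  rw [funext expIntegralE1_eq_add_expIntegralEin]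
  refine (((hasDerivAt_log hz).const_sub _).add (hasDerivAt_expIntegralEin hz0)).congr_deriv ?_
  field_simp
  ring

lemma integral_log_mul_exp_neg :
    IntegrableOn (fun t : ℝ => ((Real.log t * Real.exp (-t) : ℝ) : ℂ)) (Ioi 0) ∧
      ∫ t in Ioi (0 : ℝ), ((Real.log t * Real.exp (-t) : ℝ) : ℂ) =
        -(Real.eulerMascheroniConstant : ℂ) := by
  have hcont : Continuous fun t : ℝ => ((Real.exp (-t) : ℝ) : ℂ) := by fun_prop
  have htop : (fun t : ℝ => ((Real.exp (-t) : ℝ) : ℂ)) =O[atTop] fun t => t ^ (-2 : ℝ) := by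
    rw [isBigO_ofReal_left]
    simpa only [neg_one_mul] using (isLittleO_exp_neg_mul_rpow_atTop one_pos (-2)).isBigO
  have hzero : (fun t : ℝ => ((Real.exp (-t) : ℝ) : ℂ)) =O[𝓝[>] 0] fun t => t ^ (-0 : ℝ) := by
    simpa using hcont.continuousWithinAt.isBigO_one ℝ
  obtain ⟨hconv, hderiv⟩ := mellin_hasDerivAt_of_isBigO_rpow (s := 1)
    (hcont.locallyIntegrable.locallyIntegrableOn _) htop (by simp) hzero (by simp)
  constructor
  · simpa [MellinConvergent] using hconv
  · rw [← GammaIntegral_eq_mellin] at hderiv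
    have hGamma : HasDerivAt GammaIntegral (-(Real.eulerMascheroniConstant : ℂ)) 1 := by
      refine hasDerivAt_Gamma_one.congr_of_eventuallyEq ?_
      filter_upwards [(isOpen_lt continuous_const continuous_re).mem_nhds
        (by simp : 0 < (1 : ℂ).re)] with s hs using (Gamma_eq_integral hs).symm
    rw [← hderiv.unique hGamma, mellin]
    simp

/-- The primitive `∫₀ᵗ log u exp (-u) du`. -/
noncomputable def logExpPrimitive (t : ℝ) : ℂ :=
  ((1 - Real.exp (-t)) * Real.log t : ℝ) - expIntegralEin t

lemma hasDerivAt_logExpPrimitive {t : ℝ} (ht : 0 < t) :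
    HasDerivAt logExpPrimitive ((Real.log t * Real.exp (-t) : ℝ) : ℂ) t := by
  have ht0 : (t : ℂ) ≠ 0 := ofReal_ne_zero.mpr ht.ne'
  have hexp : HasDerivAt (fun t : ℝ => 1 - Real.exp (-t)) (Real.exp (-t)) t := by
    simpa using ((hasDerivAt_neg t).exp).const_sub 1
  refine ((hexp.mul (Real.hasDerivAt_log ht.ne')).ofReal_comp.sub
    (hasDerivAt_expIntegralEin ht0).comp_ofReal).congr_deriv ?_
  push_cast
  field_simp
  ring

lemma continuousWithinAt_logExpPrimitive_zero : ContinuousWithinAt logExpPrimitive (Ici 0) 0 := by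
  refine ContinuousWithinAt.sub ?_
    (continuous_expIntegralEin.comp continuous_ofReal).continuousWithinAt
  refine (continuous_ofReal.tendsto _).comp ?_
  have hlog : Tendsto (fun t : ℝ => |t * Real.log t|) (𝓝[Ici 0] 0) (𝓝 0) := by
    simpa using (Real.continuous_mul_log.abs.tendsto 0).mono_left
      (nhdsWithin_le_nhds (s := Ici (0 : ℝ)))
  rw [Real.log_zero, mul_zero]
  refine squeeze_zero_norm' ?_ hlog
  filter_upwards [self_mem_nhdsWithin] with t ht
  have hlower := Real.add_one_le_exp (-t)
  have hupper : Real.exp (-t) ≤ 1 := Real.exp_le_one_iff.mpr (neg_nonpos.mpr ht)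
  rw [Real.norm_eq_abs, abs_mul, abs_mul, abs_of_nonneg (by linarith : 0 ≤ 1 - Real.exp (-t)),
    abs_of_nonneg (mem_Ici.mp ht)]
  gcongr
  linarith

lemma tendsto_logExpPrimitive :
    Tendsto logExpPrimitive atTop (𝓝 (-(Real.eulerMascheroniConstant : ℂ))) := by
  obtain ⟨hint, hvalue⟩ := integral_log_mul_exp_neg
  have hderiv : ∀ t ∈ Ioi (0 : ℝ), HasDerivAt logExpPrimitive _ t :=
    fun t ht => hasDerivAt_logExpPrimitive ht
  have hlim := tendsto_limUnder_of_hasDerivAt_of_integrableOn_Ioi hderiv hint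
  have hzero : logExpPrimitive 0 = 0 := by simp [logExpPrimitive, expIntegralEin_zero]
  have hlimit := integral_Ioi_of_hasDerivAt_of_tendsto
    continuousWithinAt_logExpPrimitive_zero hderiv hint hlim
  rw [hvalue, hzero, sub_zero] at hlimit
  rwa [hlimit]

lemma tendsto_exp_neg_mul_log : Tendsto (fun t => Real.exp (-t) * Real.log t) atTop (𝓝 0) := by
  have hmajorant : Tendsto (fun t : ℝ => t * Real.exp (-t)) atTop (𝓝 0) := by
    simpa using Real.tendsto_pow_mul_exp_neg_atTop_nhds_zero 1
  refine squeeze_zero_norm' ?_ hmajorant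
  filter_upwards [eventually_ge_atTop 1] with t ht
  have hlog := Real.log_nonneg ht
  rw [Real.norm_of_nonneg (by positivity), mul_comm]
  gcongr
  exact Real.log_le_self (by linarith)

lemma tendsto_expIntegralE1_ofReal : Tendsto (fun t : ℝ => expIntegralE1 t) atTop (𝓝 0) := by
  have hlim := (tendsto_logExpPrimitive.add
    ((continuous_ofReal.tendsto _).comp tendsto_exp_neg_mul_log)).const_sub
      (-(Real.eulerMascheroniConstant : ℂ))
  rw [ofReal_zero, add_zero, sub_self] at hlim
  refine hlim.congr' ?_
  filter_upwards [eventually_gt_atTop 0] with t ht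
  rw [expIntegralE1_eq_add_expIntegralEin, logExpPrimitive, ← ofReal_log ht.le, Function.comp_apply]
  push_cast
  ring

lemma mul_ofReal_mem_slitPlane {z : ℂ} (hz : z ∈ slitPlane) {r : ℝ} (hr : 0 < r) :
    z * r ∈ slitPlane := by
  rw [mem_slitPlane_iff] at hz ⊢
  rw [re_mul_ofReal, im_mul_ofReal]
  exact hz.imp (mul_pos · hr) (mul_ne_zero · hr.ne')

lemma hasDerivAt_expIntegralE1_mul_log {z : ℂ} (hz : z ∈ slitPlane) {u : ℝ} (hu : 1 < u) :
    HasDerivAt (fun u : ℝ => expIntegralE1 (z * (Real.log u : ℂ)))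
      (-((u : ℂ) ^ (-(z + 1)) / (Real.log u : ℂ))) u := by
  have hu0 : 0 < u := by linarith
  have huc : (u : ℂ) ≠ 0 := ofReal_ne_zero.mpr hu0.ne'
  have hlog : 0 < Real.log u := Real.log_pos hu
  have hlogc : (Real.log u : ℂ) ≠ 0 := ofReal_ne_zero.mpr hlog.ne'
  have hz0 := slitPlane_ne_zero hz
  refine ((hasDerivAt_expIntegralE1 (mul_ofReal_mem_slitPlane hz hlog)).scomp u
    ((Real.hasDerivAt_log hu0.ne').ofReal_comp.const_mul z)).congr_deriv ?_
  have hpow : (u : ℂ) ^ (-(z + 1)) = exp (-(z * (Real.log u : ℂ))) * (u : ℂ)⁻¹ := by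
    rw [neg_add, cpow_add _ _ huc, cpow_neg_one, cpow_def_of_ne_zero huc, ← ofReal_log hu0.le]
    ring_nf
  rw [hpow, smul_eq_mul]
  push_cast
  field_simp

lemma integral_cpow_neg_div_log {s : ℂ} (hs : s - 1 ∈ slitPlane) {x : ℝ} (hx : 2 ≤ x) :
    ∫ u in (2 : ℝ)..x, (u : ℂ) ^ (-s) / (Real.log u : ℂ) =
      expIntegralE1 ((s - 1) * (Real.log 2 : ℂ)) - expIntegralE1 ((s - 1) * (Real.log x : ℂ)) := by
  have hgt : ∀ u ∈ uIcc 2 x, 1 < u := fun u hu => by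
    rw [uIcc_of_le hx] at hu
    linarith [hu.1]
  have hderiv : ∀ u ∈ uIcc 2 x, HasDerivAt
      (fun u : ℝ => -expIntegralE1 ((s - 1) * (Real.log u : ℂ)))
      ((u : ℂ) ^ (-s) / (Real.log u : ℂ)) u := fun u hu => by
    refine (hasDerivAt_expIntegralE1_mul_log hs (hgt u hu)).fun_neg.congr_deriv ?_
    rw [sub_add_cancel, neg_neg]
  have hcont : ContinuousOn (fun u : ℝ => (u : ℂ) ^ (-s) / (Real.log u : ℂ)) (uIcc 2 x) :=
    fun u hu => by
    have hu1 := hgt u hu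
    refine ContinuousAt.continuousWithinAt (.div ?_ ?_ (ofReal_ne_zero.mpr (Real.log_pos hu1).ne'))
    · exact continuousAt_ofReal_cpow_const _ _ (.inr (by linarith))
    · exact continuous_ofReal.continuousAt.comp (Real.continuousAt_log (by linarith))
  rw [intervalIntegral.integral_eq_sub_of_hasDerivAt hderiv hcont.intervalIntegrable]
  ring

end ExpIntegral

section PartialSummation

open Complex Set MeasureTheory Topology Asymptotics
open Chebyshev (theta theta_mono theta_eq_sum_Icc)

lemma sum_primesLE_mul_log {f f' : ℝ → ℂ} {x : ℝ} (hx : 2 ≤ x)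
    (hf : ∀ t ∈ Icc 2 x, HasDerivAt f (f' t) t) (hf' : ContinuousOn f' (Icc 2 x)) :
    ∑ p ∈ Nat.primesLE ⌊x⌋₊, f p * (Real.log p : ℂ) =
      f x * theta x - ∫ t in (2 : ℝ)..x, f' t * theta t := by
  set c : ℕ → ℂ := fun n => if n.Prime then (Real.log n : ℂ) else 0 with hc
  have htheta (t : ℝ) : ∑ k ∈ Finset.Icc 0 ⌊t⌋₊, c k = (theta t : ℂ) := by
    rw [theta_eq_sum_Icc, Finset.sum_filter, ofReal_sum]
    exact Finset.sum_congr rfl fun n _ => by simp only [hc]; split_ifs <;> simp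
  have hderiv : ∀ t ∈ Icc 2 x, deriv f t = f' t := fun t ht => (hf t ht).deriv
  have habel := sum_mul_eq_sub_integral_mul₁ c (f := f) (by simp [hc, Nat.not_prime_zero])
    (by simp [hc, Nat.not_prime_one]) x (fun t ht => (hf t ht).differentiableAt)
    (hf'.integrableOn_Icc.congr_fun (fun t ht => (hderiv t ht).symm) measurableSet_Icc)
  simp_rw [htheta] at habel
  rw [setIntegral_congr_fun measurableSet_Ioc
    (fun t ht => congrArg (· * (theta t : ℂ)) (hderiv t (Ioc_subset_Icc_self ht))),
    ← intervalIntegral.integral_of_le hx] at habel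
  rw [← habel, Nat.primesLE_eq_filter_Icc_zero, Finset.sum_filter]
  exact Finset.sum_congr rfl fun n _ => by simp only [hc, mul_ite, mul_zero]

lemma sum_primesLE_mul_log_eq_integral_add {f f' : ℝ → ℂ} {x : ℝ} (hx : 2 ≤ x)
    (hf : ∀ t ∈ Icc 2 x, HasDerivAt f (f' t) t) (hf' : ContinuousOn f' (Icc 2 x)) :
    ∑ p ∈ Nat.primesLE ⌊x⌋₊, f p * (Real.log p : ℂ) =
      (∫ t in (2 : ℝ)..x, f t) + 2 * f 2 + f x * ((theta x - x : ℝ) : ℂ) -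
        ∫ t in (2 : ℝ)..x, f' t * ((theta t - t : ℝ) : ℂ) := by
  rw [← uIcc_of_le hx] at hf'
  have htheta : IntervalIntegrable (fun t => f' t * theta t) volume 2 x :=
    (intervalIntegrable_ofReal theta_mono.intervalIntegrable).continuousOn_mul hf'
  have hid : IntervalIntegrable (fun t : ℝ => f' t * t) volume 2 x :=
    (hf'.mul (by fun_prop)).intervalIntegrable
  have hparts := intervalIntegral.integral_mul_deriv_eq_deriv_mul (v := fun t : ℝ => (t : ℂ))
    (fun t ht => hf t (uIcc_of_le hx ▸ ht)) (fun t _ => ofRealCLM.hasDerivAt)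
    hf'.intervalIntegrable (by simp)
  simp only [ofRealCLM_apply, ofReal_one, mul_one, ofReal_ofNat] at hparts
  simp_rw [ofReal_sub, mul_sub]
  rw [sum_primesLE_mul_log hx hf (uIcc_of_le hx ▸ hf'), intervalIntegral.integral_sub htheta hid,
    hparts]
  ring

lemma continuousAt_cpow_div_log_pow (w : ℂ) (j : ℕ) {u : ℝ} (hu : 1 < u) :
    ContinuousAt (fun u : ℝ => (u : ℂ) ^ w / (Real.log u : ℂ) ^ j) u := by
  have hlog : ContinuousAt (fun u : ℝ => (Real.log u : ℂ)) u :=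
    continuous_ofReal.continuousAt.comp (Real.continuousAt_log (by linarith))
  exact (continuousAt_ofReal_cpow_const _ _ (.inr (by linarith))).div (hlog.pow j)
    (pow_ne_zero _ (ofReal_ne_zero.mpr (Real.log_pos hu).ne'))

lemma hasDerivAt_cpow_neg_div_log (s : ℂ) {u : ℝ} (hu : 1 < u) :
    HasDerivAt (fun u : ℝ => (u : ℂ) ^ (-s) / (Real.log u : ℂ))
      (-(s * ((u : ℂ) ^ (-s - 1) / (Real.log u : ℂ) ^ 1) +
        (u : ℂ) ^ (-s - 1) / (Real.log u : ℂ) ^ 2)) u := by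
  have hu0 : 0 < u := by linarith
  have huc : (u : ℂ) ≠ 0 := ofReal_ne_zero.mpr hu0.ne'
  have hlog : (Real.log u : ℂ) ≠ 0 := ofReal_ne_zero.mpr (Real.log_pos hu).ne'
  have hpow : HasDerivAt (fun u : ℝ => (u : ℂ) ^ (-s)) (-s * (u : ℂ) ^ (-s - 1)) u := by
    simpa using ((hasDerivAt_id (u : ℂ)).cpow_const (c := -s)
      (ofReal_mem_slitPlane.mpr hu0)).comp_ofReal
  refine (hpow.div (Real.hasDerivAt_log hu0.ne').ofReal_comp hlog).congr_deriv ?_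
  have hsucc : (u : ℂ) ^ (-s) = u * (u : ℂ) ^ (-s - 1) := by
    rw [cpow_sub _ _ huc, cpow_one, mul_div_cancel₀ _ huc]
  rw [hsucc]
  push_cast
  field_simp
  ring

/-- The error term `θ(u) - u` in the prime number theorem, divided by `(log u) ^ j`. -/
noncomputable def thetaErrorDivLog (j : ℕ) (u : ℝ) : ℂ :=
  ((theta u - u) / Real.log u ^ j : ℝ)

/-- The Mellin transform `∫₂^∞ u ^ (-s-1) (θ(u) - u) / (log u) ^ j du` of `thetaErrorDivLog j`. -/
noncomputable def thetaErrorMellin (j : ℕ) (s : ℂ) : ℂ :=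
  mellin ((Ioi 2).indicator (thetaErrorDivLog j)) (-s)

lemma locallyIntegrableOn_thetaErrorDivLog (j : ℕ) :
    LocallyIntegrableOn (thetaErrorDivLog j) (Ici 2) := by
  have hE : LocallyIntegrable fun u : ℝ => ((theta u - u : ℝ) : ℂ) :=
    locallyIntegrable_ofReal (theta_mono.locallyIntegrable.sub continuous_id.locallyIntegrable)
  have hcont : ContinuousOn (fun u : ℝ => (u : ℂ) ^ (0 : ℂ) / (Real.log u : ℂ) ^ j) (Ici 2) :=
    fun u hu => (continuousAt_cpow_div_log_pow 0 j
      (one_lt_two.trans_le hu)).continuousWithinAt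
  refine ((hE.locallyIntegrableOn _).mul_continuousOn hcont isLocallyClosed_Ici).congr ?_
  filter_upwards with u
  rw [cpow_zero, mul_one_div, thetaErrorDivLog, ofReal_div, ofReal_pow]

variable {β : ℝ} {s : ℂ}

lemma isBigO_thetaErrorDivLog (hO : (fun x => theta x - x) =O[atTop] fun x => x ^ β)
    (j : ℕ) : thetaErrorDivLog j =O[atTop] fun x => x ^ β := by
  refine isBigO_ofReal_left.mpr (.trans (.of_norm_eventuallyLE ?_) hO.norm_left)
  filter_upwards [Real.tendsto_log_atTop.eventually_ge_atTop 1] with u hu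
  rw [norm_div, norm_pow, Real.norm_of_nonneg (zero_le_one.trans hu)]
  exact div_le_self (norm_nonneg _) (one_le_pow₀ hu)

lemma differentiableAt_thetaErrorMellin (hO : (fun x => theta x - x) =O[atTop] fun x => x ^ β)
    (hs : β < s.re) (j : ℕ) : DifferentiableAt ℂ (thetaErrorMellin j) s :=
  (differentiableAt_mellin_indicator_Ioi (locallyIntegrableOn_thetaErrorDivLog j) two_pos
    (isBigO_thetaErrorDivLog hO j) (by simpa using hs)).comp s differentiableAt_id.fun_neg

lemma tendsto_integral_thetaErrorMellin (hO : (fun x => theta x - x) =O[atTop] fun x => x ^ β)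
    (hs : β < s.re) (j : ℕ) :
    Tendsto (fun x : ℝ => ∫ u in (2 : ℝ)..x, (u : ℂ) ^ (-s - 1) * thetaErrorDivLog j u)
      atTop (𝓝 (thetaErrorMellin j s)) := by
  rw [thetaErrorMellin, mellin_indicator_Ioi zero_le_two]
  exact intervalIntegral_tendsto_integral_Ioi 2 ((mellinConvergent_indicator_Ioi zero_le_two).mp
    (mellinConvergent_indicator_Ioi_of_isBigO (locallyIntegrableOn_thetaErrorDivLog j)
      two_pos (isBigO_thetaErrorDivLog hO j) (by simpa using hs))) tendsto_id

lemma intervalIntegrable_cpow_mul_thetaErrorDivLog (w : ℂ) (j : ℕ) {x : ℝ} (hx : 2 ≤ x) :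
    IntervalIntegrable (fun u : ℝ => (u : ℂ) ^ w * thetaErrorDivLog j u) volume 2 x := by
  refine IntegrableOn.intervalIntegrable (LocallyIntegrableOn.integrableOn_isCompact
    (((locallyIntegrableOn_thetaErrorDivLog j).continuousOn_mul
      (fun u hu => ContinuousAt.continuousWithinAt ?_) isLocallyClosed_Ici).mono_set
        (uIcc_of_le hx ▸ Icc_subset_Ici_self)) isCompact_uIcc)
  exact continuousAt_ofReal_cpow_const _ _ (.inr (two_pos.trans_le hu).ne')

lemma sum_primesLE_cpow_neg_eq_integral_add (s : ℂ) {x : ℝ} (hx : 2 ≤ x) :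
    ∑ p ∈ Nat.primesLE ⌊x⌋₊, (p : ℂ) ^ (-s) =
      (∫ u in (2 : ℝ)..x, (u : ℂ) ^ (-s) / (Real.log u : ℂ)) +
        2 * ((2 : ℂ) ^ (-s) / (Real.log 2 : ℂ)) + (x : ℂ) ^ (-s) * thetaErrorDivLog 1 x +
        s * (∫ u in (2 : ℝ)..x, (u : ℂ) ^ (-s - 1) * thetaErrorDivLog 1 u) +
        ∫ u in (2 : ℝ)..x, (u : ℂ) ^ (-s - 1) * thetaErrorDivLog 2 u := by
  have hgt : ∀ u ∈ Icc 2 x, 1 < u := fun u hu => one_lt_two.trans_le hu.1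
  have hcont (j : ℕ) : ContinuousOn (fun u : ℝ => (u : ℂ) ^ (-s - 1) / (Real.log u : ℂ) ^ j)
      (Icc 2 x) := fun u hu =>
    (continuousAt_cpow_div_log_pow _ j (hgt u hu)).continuousWithinAt
  have hint (j : ℕ) := intervalIntegrable_cpow_mul_thetaErrorDivLog (-s - 1) j hx
  have hsum : ∑ p ∈ Nat.primesLE ⌊x⌋₊, (p : ℂ) ^ (-s) = ∑ p ∈ Nat.primesLE ⌊x⌋₊,
      ((p : ℝ) : ℂ) ^ (-s) / (Real.log p : ℂ) * (Real.log p : ℂ) :=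
    Finset.sum_congr rfl fun p hp => by
      rw [ofReal_natCast, div_mul_cancel₀]
      exact ofReal_ne_zero.mpr
        (Real.log_pos (Nat.one_lt_cast.mpr (Nat.one_lt_of_mem_primesLE hp))).ne'
  have hsplit : ∫ u in (2 : ℝ)..x, -(s * ((u : ℂ) ^ (-s - 1) / (Real.log u : ℂ) ^ 1) +
      (u : ℂ) ^ (-s - 1) / (Real.log u : ℂ) ^ 2) * ((theta u - u : ℝ) : ℂ) =
      -(s * (∫ u in (2 : ℝ)..x, (u : ℂ) ^ (-s - 1) * thetaErrorDivLog 1 u) +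
        ∫ u in (2 : ℝ)..x, (u : ℂ) ^ (-s - 1) * thetaErrorDivLog 2 u) := by
    rw [← intervalIntegral.integral_const_mul, ← intervalIntegral.integral_add
      ((hint 1).const_mul s) (hint 2), ← intervalIntegral.integral_neg]
    refine intervalIntegral.integral_congr fun u _ => ?_
    simp only [thetaErrorDivLog, ofReal_div, ofReal_pow]
    ring
  rw [hsum, sum_primesLE_mul_log_eq_integral_add hx
    (fun u hu => hasDerivAt_cpow_neg_div_log s (hgt u hu))
    ((continuousOn_const.mul (hcont 1)).add (hcont 2)).neg, hsplit, thetaErrorDivLog]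
  push_cast
  ring

lemma tendsto_cpow_neg_mul_thetaErrorDivLog (hO : (fun x => theta x - x) =O[atTop] fun x => x ^ β)
    (hs : β < s.re) (j : ℕ) :
    Tendsto (fun x : ℝ => (x : ℂ) ^ (-s) * thetaErrorDivLog j x)
      atTop (𝓝 0) := by
  have hpow : (fun x : ℝ => (x : ℂ) ^ (-s)) =O[atTop] fun x => x ^ (-s.re) := by
    refine .of_norm_eventuallyLE ((eventually_gt_atTop 0).mono fun x hx => ?_)
    simp [norm_cpow_eq_rpow_re_of_pos hx]
  refine ((hpow.mul (isBigO_thetaErrorDivLog hO j)).congr' .rfl ?_).trans_tendsto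
    (tendsto_rpow_neg_atTop (sub_pos.mpr hs))
  filter_upwards [eventually_gt_atTop 0] with x hx
  rw [← Real.rpow_add hx]
  ring_nf

/-- The limit `lim (∑_{p ≤ x} p ^ (-s) - ∫₂ˣ u ^ (-s) / log u du)`, in the form given by partial
summation. -/
noncomputable def primeSumSubIntegralLim (s : ℂ) : ℂ :=
  2 * ((2 : ℂ) ^ (-s) / (Real.log 2 : ℂ)) + s * thetaErrorMellin 1 s + thetaErrorMellin 2 s

lemma tendsto_primeSumSubIntegralLim (hO : (fun x => theta x - x) =O[atTop] fun x => x ^ β)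
    (hs : β < s.re) :
    Tendsto (fun x : ℝ => ∑ p ∈ Nat.primesLE ⌊x⌋₊, (p : ℂ) ^ (-s) -
        ∫ u in (2 : ℝ)..x, (u : ℂ) ^ (-s) / (Real.log u : ℂ))
      atTop (𝓝 (primeSumSubIntegralLim s)) := by
  have hlim := (((tendsto_cpow_neg_mul_thetaErrorDivLog hO hs 1).const_add
    (2 * ((2 : ℂ) ^ (-s) / (Real.log 2 : ℂ)))).add
      ((tendsto_integral_thetaErrorMellin hO hs 1).const_mul s)).add
        (tendsto_integral_thetaErrorMellin hO hs 2)
  rw [add_zero] at hlim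
  refine hlim.congr' ?_
  filter_upwards [eventually_ge_atTop 2] with x hx
  rw [sum_primesLE_cpow_neg_eq_integral_add s hx]
  ring

lemma differentiableAt_primeSumSubIntegralLim
    (hO : (fun x => theta x - x) =O[atTop] fun x => x ^ β) (hs : β < s.re) :
    DifferentiableAt ℂ primeSumSubIntegralLim s := by
  have hpow : DifferentiableAt ℂ (fun s : ℂ => (2 : ℂ) ^ (-s)) s :=
    differentiableAt_id.neg.const_cpow (.inl two_ne_zero)
  exact (((hpow.div_const _).const_mul 2).add (differentiableAt_id.mul
    (differentiableAt_thetaErrorMellin hO hs 1))).add (differentiableAt_thetaErrorMellin hO hs 2)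

end PartialSummation

section EulerProduct

open Complex Set Topology Asymptotics
open Chebyshev (theta)

lemma norm_log_one_sub_add_self_le {z : ℂ} (hz : ‖z‖ ≤ 3 / 4) :
    ‖log (1 - z) + z‖ ≤ 2 * ‖z‖ ^ 2 := by
  have hinv : (1 - ‖z‖)⁻¹ ≤ 4 := by
    rw [inv_le_comm₀ (by linarith) (by norm_num)]
    linarith
  calc ‖log (1 - z) + z‖ ≤ ‖-z‖ ^ 2 * (1 - ‖-z‖)⁻¹ / 2 := by
        simpa [sub_eq_add_neg] using
          norm_log_one_add_sub_self_le (z := -z) (by rw [norm_neg]; linarith)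
    _ ≤ ‖z‖ ^ 2 * 4 / 2 := by
        rw [norm_neg]
        gcongr
    _ = 2 * ‖z‖ ^ 2 := by ring

lemma norm_natCast_cpow_neg_le {n : ℕ} (hn : 2 ≤ n) {s : ℂ} (hs : 1 / 2 ≤ s.re) :
    ‖(n : ℂ) ^ (-s)‖ ≤ 3 / 4 := by
  have hn2 : (2 : ℝ) ≤ n := Nat.ofNat_le_cast.mpr hn
  rw [norm_natCast_cpow_of_pos (by lia), neg_re]
  calc (n : ℝ) ^ (-s.re) ≤ (n : ℝ) ^ (-(1 / 2) : ℝ) := by gcongr; linarith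
    _ ≤ (2 : ℝ) ^ (-(1 / 2) : ℝ) := Real.rpow_le_rpow_of_nonpos two_pos hn2 (by norm_num)
    _ ≤ 3 / 4 := by
        rw [Real.rpow_neg zero_le_two, ← Real.sqrt_eq_rpow,
          inv_le_comm₀ (by positivity) (by norm_num)]
        exact Real.le_sqrt_of_sq_le (by norm_num)

lemma one_sub_natCast_cpow_neg_mem_slitPlane {n : ℕ} (hn : 2 ≤ n) {s : ℂ} (hs : 1 / 2 ≤ s.re) :
    1 - (n : ℂ) ^ (-s) ∈ slitPlane := by
  rw [sub_eq_add_neg]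
  refine mem_slitPlane_of_norm_lt_one ?_
  linarith [norm_neg ((n : ℂ) ^ (-s)), norm_natCast_cpow_neg_le hn hs]

/-- The part of order at least two of the logarithm of the Euler factor at `n`, set to `0` when `n`
is not prime. -/
noncomputable def eulerLogRemainder (n : ℕ) (s : ℂ) : ℂ :=
  if n.Prime then log (1 - (n : ℂ) ^ (-s)) + (n : ℂ) ^ (-s) else 0

lemma norm_eulerLogRemainder_le {σ : ℝ} (hσ : 1 / 2 ≤ σ) {s : ℂ} (hs : σ ≤ s.re) (n : ℕ) :
    ‖eulerLogRemainder n s‖ ≤ 2 * (n : ℝ) ^ (-(2 * σ)) := by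
  rw [eulerLogRemainder]
  split_ifs with hn
  · refine (norm_log_one_sub_add_self_le
      (norm_natCast_cpow_neg_le hn.two_le (hσ.trans hs))).trans ?_
    have hn1 : (1 : ℝ) ≤ n := Nat.one_le_cast.mpr hn.one_le
    rw [norm_natCast_cpow_of_pos hn.pos, neg_re, ← Real.rpow_mul_natCast n.cast_nonneg]
    gcongr
    push_cast
    linarith
  · rw [norm_zero]
    positivity

lemma summable_two_mul_natCast_rpow_neg {σ : ℝ} (hσ : 1 / 2 < σ) :
    Summable fun n : ℕ => 2 * (n : ℝ) ^ (-(2 * σ)) :=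
  (Real.summable_nat_rpow.mpr (by linarith)).mul_left 2

lemma summable_eulerLogRemainder {s : ℂ} (hs : 1 / 2 < s.re) :
    Summable fun n => eulerLogRemainder n s :=
  .of_norm_bounded (summable_two_mul_natCast_rpow_neg hs) (norm_eulerLogRemainder_le hs.le le_rfl)

lemma differentiableAt_eulerLogRemainder {s : ℂ} (hs : 1 / 2 ≤ s.re) (n : ℕ) :
    DifferentiableAt ℂ (eulerLogRemainder n) s := by
  unfold eulerLogRemainder
  split_ifs with hn
  · have hpow : DifferentiableAt ℂ (fun s : ℂ => (n : ℂ) ^ (-s)) s :=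
      differentiableAt_id.neg.const_cpow (.inl (Nat.cast_ne_zero.mpr hn.ne_zero))
    exact ((hpow.const_sub 1).clog
      (one_sub_natCast_cpow_neg_mem_slitPlane hn.two_le hs)).fun_add hpow
  · exact differentiableAt_const 0

lemma differentiableAt_tsum_eulerLogRemainder {s : ℂ} (hs : 1 / 2 < s.re) :
    DifferentiableAt ℂ (fun s => ∑' n, eulerLogRemainder n s) s := by
  obtain ⟨σ, hσ, hσs⟩ := exists_between hs
  have hopen : IsOpen {z : ℂ | σ < z.re} := isOpen_lt continuous_const continuous_re
  have hdiff := differentiableOn_tsum_of_summable_norm (summable_two_mul_natCast_rpow_neg hσ)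
    (fun n z (hz : σ < z.re) =>
      (differentiableAt_eulerLogRemainder (hσ.trans hz).le n).differentiableWithinAt)
    hopen (fun n z (hz : σ < z.re) => norm_eulerLogRemainder_le hσ.le hz.le n)
  exact hdiff.differentiableAt (hopen.mem_nhds hσs)

lemma prod_primesBelow_one_sub_cpow_neg {s : ℂ} (hs : 1 / 2 ≤ s.re) (N : ℕ) :
    ∏ p ∈ Nat.primesBelow N, (1 - (p : ℂ) ^ (-s)) =
      exp (∑ n ∈ Finset.range N, eulerLogRemainder n s -
        ∑ p ∈ Nat.primesBelow N, (p : ℂ) ^ (-s)) := by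
  have hrem : ∑ n ∈ Finset.range N, eulerLogRemainder n s =
      ∑ p ∈ Nat.primesBelow N, (log (1 - (p : ℂ) ^ (-s)) + (p : ℂ) ^ (-s)) :=
    (Finset.sum_filter ..).symm
  rw [hrem, ← Finset.sum_sub_distrib, exp_sum]
  refine Finset.prod_congr rfl fun p hp => ?_
  rw [add_sub_cancel_right, exp_log (slitPlane_ne_zero
    (one_sub_natCast_cpow_neg_mem_slitPlane (Nat.two_le_of_mem_primesBelow hp) hs))]

/-- The logarithm of the limit of `exp (-E₁ ((s - 1) log x)) * ∏_{p ≤ x} (1 - p ^ (-s))`, written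
as a sum of three holomorphic functions. -/
noncomputable def logInvZeta (s : ℂ) : ℂ :=
  ∑' n, eulerLogRemainder n s - primeSumSubIntegralLim s -
    expIntegralE1 ((s - 1) * (Real.log 2 : ℂ))

lemma tendsto_floor_add_one_atTop : Tendsto (fun x : ℝ => ⌊x⌋₊ + 1) atTop atTop :=
  (tendsto_add_atTop_nat 1).comp tendsto_nat_floor_atTop

variable {β : ℝ} {s : ℂ}

lemma tendsto_exp_logInvZeta (hβ : 1 / 2 ≤ β)
    (hO : (fun x => theta x - x) =O[atTop] fun x => x ^ β) (hs : β < s.re)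
    (hs' : s - 1 ∈ slitPlane) :
    Tendsto (fun x : ℝ => exp (-expIntegralE1 ((s - 1) * (Real.log x : ℂ))) *
      ∏ p ∈ Nat.primesBelow (⌊x⌋₊ + 1), (1 - (p : ℂ) ^ (-s))) atTop (𝓝 (exp (logInvZeta s))) := by
  have hhalf : 1 / 2 < s.re := hβ.trans_lt hs
  have hlim := ((((summable_eulerLogRemainder hhalf).hasSum.tendsto_sum_nat.comp
    tendsto_floor_add_one_atTop).sub (tendsto_primeSumSubIntegralLim hO hs)).sub_const
      (expIntegralE1 ((s - 1) * (Real.log 2 : ℂ)))).cexp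
  refine hlim.congr' ?_
  filter_upwards [eventually_ge_atTop 2] with x hx
  rw [prod_primesBelow_one_sub_cpow_neg hhalf.le, ← exp_add, integral_cpow_neg_div_log hs' hx,
    Nat.primesLE, Function.comp_apply]
  ring_nf

lemma differentiableAt_logInvZeta (hβ : 1 / 2 ≤ β)
    (hO : (fun x => theta x - x) =O[atTop] fun x => x ^ β) (hs : β < s.re)
    (hs' : s - 1 ∈ slitPlane) : DifferentiableAt ℂ logInvZeta s := by
  refine ((differentiableAt_tsum_eulerLogRemainder (hβ.trans_lt hs)).sub
    (differentiableAt_primeSumSubIntegralLim hO hs)).sub ?_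
  exact DifferentiableAt.comp (f := fun s : ℂ => (s - 1) * (Real.log 2 : ℂ)) s
    (hasDerivAt_expIntegralE1 (mul_ofReal_mem_slitPlane hs'
      (Real.log_pos one_lt_two))).differentiableAt (by fun_prop)

lemma tendsto_exp_neg_expIntegralE1_mul_prod_ofReal {σ : ℝ} (hσ : 1 < σ) :
    Tendsto (fun x : ℝ => exp (-expIntegralE1 (((σ : ℂ) - 1) * (Real.log x : ℂ))) *
      ∏ p ∈ Nat.primesBelow (⌊x⌋₊ + 1), (1 - (p : ℂ) ^ (-(σ : ℂ)))) atTop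
      (𝓝 (riemannZeta σ)⁻¹) := by
  have hre : 1 < (σ : ℂ).re := hσ
  have hE1 := (tendsto_expIntegralE1_ofReal.comp
    (Real.tendsto_log_atTop.const_mul_atTop (sub_pos.mpr hσ))).neg.cexp
  have hprod := ((riemannZeta_eulerProduct hre).inv₀
    (riemannZeta_ne_zero_of_one_lt_re hre)).comp tendsto_floor_add_one_atTop
  convert hE1.mul hprod using 2 with x
  · simp
  · simp

lemma starConvex_setOf_lt_re_and_sub_one_mem_slitPlane {c : ℝ} (hβc : β < c) (hc : 1 < c) :
    StarConvex ℝ (c : ℂ) {z : ℂ | β < z.re ∧ z - 1 ∈ slitPlane} := by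
  have hslit : StarConvex ℝ (c : ℂ) ((fun z => z + -1) ⁻¹' slitPlane) := by
    refine StarConvex.preimage_add_left ?_
    simpa [← sub_eq_add_neg] using starConvex_ofReal_slitPlane (sub_pos.mpr hc)
  simp only [← sub_eq_add_neg] at hslit
  exact ((convex_halfSpace_re_gt β).starConvex hβc).inter hslit

lemma ofReal_sub_one_mem_slitPlane {σ : ℝ} (hσ : 1 < σ) : (σ : ℂ) - 1 ∈ slitPlane :=
  mem_slitPlane_iff.mpr (.inl (by simpa using hσ))

lemma exp_logInvZeta_mul_riemannZeta_ofReal (hβ : 1 / 2 ≤ β)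
    (hO : (fun x => theta x - x) =O[atTop] fun x => x ^ β) {σ : ℝ} (hσβ : β < σ) (hσ : 1 < σ) :
    exp (logInvZeta σ) * riemannZeta σ = 1 := by
  rw [tendsto_nhds_unique
    (tendsto_exp_logInvZeta hβ hO hσβ (ofReal_sub_one_mem_slitPlane hσ))
    (tendsto_exp_neg_expIntegralE1_mul_prod_ofReal hσ)]
  exact inv_mul_cancel₀ (riemannZeta_ne_zero_of_one_lt_re hσ)

lemma tendsto_ofReal_nhdsGT_nhdsNE (c : ℝ) :
    Tendsto ((↑) : ℝ → ℂ) (𝓝[>] c) (𝓝[≠] (c : ℂ)) :=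
  (continuous_ofReal.continuousWithinAt.tendsto_nhdsWithin fun _ hx =>
    ofReal_injective.ne (ne_of_gt hx))

lemma exp_logInvZeta_mul_riemannZeta (hβ : 1 / 2 ≤ β)
    (hO : (fun x => theta x - x) =O[atTop] fun x => x ^ β) (hs : β < s.re)
    (hs' : s - 1 ∈ slitPlane) : exp (logInvZeta s) * riemannZeta s = 1 := by
  set U : Set ℂ := {z | β < z.re ∧ z - 1 ∈ slitPlane}
  obtain ⟨c, hc⟩ := exists_gt (max β 1)
  obtain ⟨hβc, hc1⟩ := max_lt_iff.mp hc
  have hcU : (c : ℂ) ∈ U := ⟨hβc, ofReal_sub_one_mem_slitPlane hc1⟩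
  have hopen : IsOpen U := (isOpen_lt continuous_const continuous_re).inter
    (isOpen_slitPlane.preimage (by fun_prop))
  have hconn : IsPreconnected U :=
    ((starConvex_setOf_lt_re_and_sub_one_mem_slitPlane hβc hc1).isPathConnected
      hcU).isConnected.isPreconnected
  have hanalytic : AnalyticOnNhd ℂ (fun z => exp (logInvZeta z) * riemannZeta z) U := by
    refine DifferentiableOn.analyticOnNhd (fun z hz => ?_) hopen
    have hz1 : z ≠ 1 := sub_ne_zero.mp (slitPlane_ne_zero hz.2)
    exact ((differentiableAt_logInvZeta hβ hO hz.1 hz.2).cexp.mul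
      (differentiableAt_riemannZeta hz1)).differentiableWithinAt
  have hreal : ∃ᶠ z in 𝓝[≠] (c : ℂ), exp (logInvZeta z) * riemannZeta z = 1 := by
    refine (tendsto_ofReal_nhdsGT_nhdsNE c).frequently (Eventually.frequently ?_)
    filter_upwards [self_mem_nhdsWithin] with σ (hσ : c < σ)
    exact exp_logInvZeta_mul_riemannZeta_ofReal hβ hO (hβc.trans hσ) (hc1.trans hσ)
  exact hanalytic.eqOn_of_preconnected_of_frequently_eq analyticOnNhd_const hconn hcU hreal
    ⟨hs, hs'⟩

end EulerProduct

section MainTheorem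

open Complex

lemma riemannZeta_ne_zero_of_one_half_lt_re (RH : RiemannHypothesis) {s : ℂ}
    (hs : 1 / 2 < s.re) : riemannZeta s ≠ 0 := by
  intro hzero
  have hs1 : s ≠ 1 := by
    rintro rfl
    exact riemannZeta_one_ne_zero hzero
  refine hs.ne' (RH s hzero ?_ hs1)
  rintro ⟨n, rfl⟩
  have hre : (-2 * ((n : ℂ) + 1)).re = -2 * ((n : ℝ) + 1) := by simp
  linarith [n.cast_nonneg (α := ℝ)]

lemma mem_slitPlane_of_forall_nonpos_ne {z : ℂ} (hz : ¬∃ r : ℝ, r ≤ 0 ∧ z = (r : ℂ)) :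
    z ∈ slitPlane := by
  rw [mem_slitPlane_iff]
  by_contra! hcon
  exact hz ⟨z.re, hcon.1, Complex.ext rfl hcon.2⟩

theorem inv_zeta_euler_product_general {θ : ℝ} (hθ : 1 / 2 ≤ θ)
    (hζ : ∀ z : ℂ, θ < z.re → riemannZeta z ≠ 0) {s : ℂ} (hs : θ < s.re)
    (hs' : s - 1 ∈ slitPlane) :
    Tendsto
      (fun x : ℝ =>
        exp (-expIntegralE1 ((s - 1) * (Real.log x : ℂ))) *
          ∏ p ∈ Nat.primesBelow (⌊x⌋₊ + 1), (1 - (p : ℂ) ^ (-s)))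
      atTop (nhds (riemannZeta s)⁻¹) := by
  obtain ⟨β, hθβ, hβs⟩ := exists_between hs
  have hO := isBigO_theta_sub_id hθ hζ hθβ
  have hβ := hθ.trans hθβ.le
  rw [← eq_inv_of_mul_eq_one_left (exp_logInvZeta_mul_riemannZeta hβ hO hβs hs')]
  exact tendsto_exp_logInvZeta hβ hO hβs hs'

end MainTheorem

/-- Assuming RH, for `Re(s) > 1/2` with `s - 1` off the nonpositive real axis,
`1/ζ(s) = lim_{x→∞} exp(−E₁((s-1)·log x)) · ∏_{p ≤ x} (1 - p^{-s})`. -/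
theorem inv_zeta_euler_product (RH : RiemannHypothesis) (s : ℂ)
    (hs : 1 / 2 < s.re) (hs' : ¬∃ r : ℝ, r ≤ 0 ∧ s - 1 = (r : ℂ)) :
    Tendsto
      (fun x : ℝ =>
        Complex.exp (-expIntegralE1 ((s - 1) * (Real.log x : ℂ))) *
          ∏ p ∈ Nat.primesBelow (⌊x⌋₊ + 1), (1 - (p : ℂ) ^ (-s)))
      atTop (nhds (riemannZeta s)⁻¹) := by
  exact inv_zeta_euler_product_general le_rfl
    (fun _ => riemannZeta_ne_zero_of_one_half_lt_re RH) hs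
    (mem_slitPlane_of_forall_nonpos_ne hs')
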